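/- arXiv:0704.3645 — 4 statements merged into one kernel-verified Lean document; each statement's English description precedes it below -/
import Mathlib

section
/- Let 1 ∈ A ⊆ B be an inclusion of unital C*-algebras with A simple, and suppose there exists a faithful conditional expectation E : B → A admitting a quasi-basis. Then there exists a conditional expectation F : B → A admitting a quasi-basis which is pseudominimal, i.e., Index(F) is a scalar multiple of the unit of B and F(c b) = F(b c) for all c ∈ A' ∩ B and all b ∈ B. -/
/-!
Since `Z(A) = ℂ`, the expectation `E` maps `C = A' ∩ B` to scalars. A family in `C` that is
orthonormal for `E` is dominated, in the sense of Bessel, by the quasi-basis `u`, while the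
Pimsner–Popa inequality `x* x ≤ t E(x* x)` compares `E(c* c)` with `E(c c*)` on `C`; together they
bound the size of such a family by `t²`, so `C` has a finite basis `e`. The map
`G(x) = ∑ E(eᵢ* x eᵢ)` is a trace relative to `C`, and `E = G(g ·)` for a positive invertible
`g ∈ C`, so the `uⱼ g^{1/2}` form a quasi-basis for `G`. The index `h` of a quasi-basis is central
in `B`, so `G(h ·)` is still a trace relative to `C`; its index is a scalar, and it is normalized to
be unital.
-/

/-- The relative commutant `A' ∩ B` of a star-subalgebra `A` of `B`. -/
abbrev relativeCommutant {B : Type*} [CStarAlgebra B] (A : StarSubalgebra ℂ B) :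
    StarSubalgebra ℂ B :=
  StarSubalgebra.centralizer ℂ (A : Set B)

/-- Simplicity of a C*-subalgebra `A`: its only closed two-sided ideals, encoded as subsets of the
ambient algebra, are `0` and `A`. -/
def IsTopologicallySimple {B : Type*} [CStarAlgebra B] (A : StarSubalgebra ℂ B) : Prop :=
  ∀ I : Set B, I ⊆ (A : Set B) → IsClosed I → (0 : B) ∈ I →
    (∀ x ∈ I, ∀ y ∈ I, x + y ∈ I) → (∀ x ∈ I, -x ∈ I) →
    (∀ x ∈ I, ∀ a ∈ A, a * x ∈ I) → (∀ x ∈ I, ∀ a ∈ A, x * a ∈ I) →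
    I = {0} ∨ I = (A : Set B)

/-- Positive left `A`-module maps `B → A`, encoded as endomorphisms of `B`. By positivity they are
also right `A`-module maps; they need not preserve the unit. -/
structure IsPositiveBimoduleMap {B : Type*} [CStarAlgebra B] [PartialOrder B]
    (A : StarSubalgebra ℂ B) (E : B →ₗ[ℂ] B) : Prop where
  map_mem : ∀ x, E x ∈ A
  map_mul_left : ∀ a ∈ A, ∀ x, E (a * x) = a * E x
  map_nonneg : ∀ x, 0 ≤ x → 0 ≤ E x

/-- Conditional expectations onto `A`: the unital positive bimodule maps. -/
structure IsConditionalExpectation {B : Type*} [CStarAlgebra B] [PartialOrder B]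
    (A : StarSubalgebra ℂ B) (E : B →ₗ[ℂ] B) : Prop extends IsPositiveBimoduleMap A E where
  map_one : E 1 = 1

/-- Faithfulness of a positive map. -/
def IsFaithful {B : Type*} [CStarAlgebra B] (E : B →ₗ[ℂ] B) : Prop :=
  ∀ x, E (star x * x) = 0 → x = 0

/-- `E` satisfies the trace identity against the relative commutant of `A`. -/
def IsRelativelyTracial {B : Type*} [CStarAlgebra B] (A : StarSubalgebra ℂ B)
    (E : B →ₗ[ℂ] B) : Prop :=
  ∀ c ∈ relativeCommutant A, ∀ b, E (c * b) = E (b * c)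

/-- The reconstruction operator `b ↦ ∑ uⱼ E(uⱼ* b)` of a family `u`: it is the identity when `u` is
a quasi-basis, and the projection onto the right `A`-span of `u` when `u` is orthonormal. -/
noncomputable def reconstruction {B ι : Type*} [CStarAlgebra B] [Fintype ι] (E : B →ₗ[ℂ] B)
    (u : ι → B) : B →ₗ[ℂ] B :=
  ∑ j, LinearMap.mulLeft ℂ (u j) ∘ₗ E ∘ₗ LinearMap.mulLeft ℂ (star (u j))

/-- Quasi-bases of `E`. Only one of the two reconstruction identities is required: for positive `E`
the other one is its adjoint, see `IsQuasiBasis.sum_map_mul_star`. -/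
def IsQuasiBasis {B ι : Type*} [CStarAlgebra B] [Fintype ι] (E : B →ₗ[ℂ] B) (u : ι → B) : Prop :=
  ∀ b, reconstruction E u b = b

/-- The index `∑ uⱼ uⱼ*` of a quasi-basis. -/
noncomputable def quasiBasisIndex {B ι : Type*} [CStarAlgebra B] [Fintype ι] (u : ι → B) : B :=
  ∑ j, u j * star (u j)

/-- Families orthonormal for the `A`-valued inner product `⟨x, y⟩ = E(x* y)`. -/
def IsOrthonormalFamily {B ι : Type*} [CStarAlgebra B] [DecidableEq ι] (E : B →ₗ[ℂ] B)
    (e : ι → B) : Prop :=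
  ∀ i j, E (star (e i) * e j) = if i = j then 1 else 0

/-- The map `x ↦ ∑ E(eᵢ* x eᵢ)`. For a basis `e` of the relative commutant it is the analogue of the
trace of the left regular representation. -/
noncomputable def compressionSum {B ι : Type*} [CStarAlgebra B] [Fintype ι] (E : B →ₗ[ℂ] B)
    (e : ι → B) : B →ₗ[ℂ] B :=
  ∑ i, E ∘ₗ LinearMap.mulLeft ℂ (star (e i)) ∘ₗ LinearMap.mulRight ℂ (e i)

/-- The perturbation `x ↦ E(h x)` of `E` by the density `h`. -/
noncomputable def withDensity {B : Type*} [CStarAlgebra B] (E : B →ₗ[ℂ] B) (h : B) : B →ₗ[ℂ] B :=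
  E ∘ₗ LinearMap.mulLeft ℂ h

section Basic

variable {B : Type*} [CStarAlgebra B] {A : StarSubalgebra ℂ B} {E : B →ₗ[ℂ] B}

theorem mem_relativeCommutant_iff {c : B} :
    c ∈ relativeCommutant A ↔ ∀ a ∈ A, Commute c a := by
  rw [StarSubalgebra.mem_centralizer_iff]
  exact ⟨fun h a ha => (h a ha).1.symm,
    fun h a ha => ⟨(h a ha).symm.eq, (h _ (star_mem ha)).symm.eq⟩⟩

theorem commute_of_mem_relativeCommutant {c a : B} (hc : c ∈ relativeCommutant A) (ha : a ∈ A) :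
    Commute c a :=
  mem_relativeCommutant_iff.1 hc a ha

theorem reconstruction_apply {ι : Type*} [Fintype ι] (u : ι → B) (b : B) :
    reconstruction E u b = ∑ j, u j * E (star (u j) * b) := by
  simp [reconstruction]

theorem compressionSum_apply {ι : Type*} [Fintype ι] (e : ι → B) (x : B) :
    compressionSum E e x = ∑ i, E (star (e i) * x * e i) := by
  simp [compressionSum, mul_assoc]

theorem withDensity_apply (h x : B) : withDensity E h x = E (h * x) :=
  rfl

theorem IsOrthonormalFamily.reconstruction_self {κ : Type*} [Fintype κ] [DecidableEq κ]
    {e : κ → B} (he : IsOrthonormalFamily E e) (k : κ) :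
    reconstruction E e (e k) = e k := by
  simp [reconstruction_apply, he _ k]

theorem IsFaithful.eq_of_forall_map_mul_eq (hfaithful : IsFaithful E) {x y : B}
    (h : ∀ b, E (b * x) = E (b * y)) : x = y :=
  sub_eq_zero.1 (hfaithful _ (by rw [mul_sub, map_sub, h, sub_self]))

theorem withDensity_withDensity (g h : B) :
    withDensity (withDensity E g) h = withDensity E (g * h) :=
  LinearMap.ext fun x => by simp only [withDensity_apply, mul_assoc]

theorem withDensity_one : withDensity E 1 = E :=
  LinearMap.ext fun x => by rw [withDensity_apply, one_mul]

theorem isRelativelyTracial_withDensity (htr : IsRelativelyTracial A E) {g : B}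
    (hcentral : ∀ b, Commute g b) : IsRelativelyTracial A (withDensity E g) := by
  intro c hc b
  rw [withDensity_apply, withDensity_apply, (hcentral c).left_comm, htr c hc, mul_assoc]

end Basic

section Simple

variable {B : Type*} [CStarAlgebra B] {A : StarSubalgebra ℂ B}

theorem IsTopologicallySimple.isUnit_of_mem_relativeCommutant (hsimple : IsTopologicallySimple A)
    (hclosed : IsClosed (A : Set B)) {d : B} (hdA : d ∈ A) (hd : d ∈ relativeCommutant A)
    (hd0 : d ≠ 0) : IsUnit d := by
  let dA : Submodule ℂ B := A.toSubalgebra.toSubmodule.map (LinearMap.mulLeft ℂ d)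
  let I : Submodule ℂ B := dA.topologicalClosure
  have hdI : d ∈ I := subset_closure ⟨1, one_mem A, by simp⟩
  have hIA : (I : Set B) ⊆ A := by
    refine closure_minimal ?_ hclosed
    rintro _ ⟨y, hy, rfl⟩
    exact A.mul_mem hdA hy
  have mul_left_mem (x) (hx : x ∈ I) (a) (ha : a ∈ A) : a * x ∈ I := by
    refine map_mem_closure (f := fun x => a * x) (by fun_prop) hx ?_
    rintro _ ⟨y, hy, rfl⟩
    exact ⟨a * y, A.mul_mem ha hy, (commute_of_mem_relativeCommutant hd ha).left_comm y⟩
  have mul_right_mem (x) (hx : x ∈ I) (a) (ha : a ∈ A) : x * a ∈ I := by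
    refine map_mem_closure (f := fun x => x * a) (by fun_prop) hx ?_
    rintro _ ⟨y, hy, rfl⟩
    exact ⟨y * a, A.mul_mem hy ha, (mul_assoc d y a).symm⟩
  obtain hI | hI := hsimple I hIA dA.isClosed_topologicalClosure I.zero_mem
    (fun _ hx _ hy => I.add_mem hx hy) (fun _ hx => I.neg_mem hx) mul_left_mem mul_right_mem
  · exact absurd (hI ▸ hdI : d ∈ ({0} : Set B)) hd0
  · have one_mem_closure : (1 : B) ∈ closure (dA : Set B) := hI.symm.subset (one_mem A)
    obtain ⟨_, ⟨y, hy, rfl⟩, hlt⟩ := Metric.mem_closure_iff.1 one_mem_closure 1 one_pos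
    have hdy : IsUnit (d * y) := by
      simpa using isUnit_one_sub_of_norm_lt_one (x := 1 - d * y) (by simpa [dist_eq_norm] using hlt)
    exact ((commute_of_mem_relativeCommutant hd hy).isUnit_mul_iff.1 hdy).1

theorem IsTopologicallySimple.isCentral (hsimple : IsTopologicallySimple A)
    (hclosed : IsClosed (A : Set B)) : Algebra.IsCentral ℂ A where
  out c hc := by
    rcases subsingleton_or_nontrivial B with _ | _
    · exact Subsingleton.elim 0 c ▸ zero_mem _
    obtain ⟨z, hz⟩ := spectrum.nonempty (c : B)
    have hsub_mem : (c : B) - algebraMap ℂ B z ∈ relativeCommutant A := by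
      refine sub_mem (mem_relativeCommutant_iff.2 fun a ha => ?_) (algebraMap_mem _ z)
      exact congrArg Subtype.val (Subalgebra.mem_center_iff.1 hc ⟨a, ha⟩).symm
    have hsub : (c : B) - algebraMap ℂ B z = 0 := by
      by_contra hne
      refine spectrum.mem_iff.1 hz (IsUnit.sub_iff.1 ?_)
      exact hsimple.isUnit_of_mem_relativeCommutant hclosed
        (sub_mem c.2 (algebraMap_mem A z)) hsub_mem hne
    exact Algebra.mem_bot.2 ⟨z, Subtype.ext (sub_eq_zero.1 hsub).symm⟩

end Simple

section Order

variable {B : Type*} [CStarAlgebra B] [PartialOrder B] [StarOrderedRing B]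

theorem commute_sqrt {x b : B} (h : Commute x b) : Commute (CFC.sqrt x) b := by
  rw [CFC.sqrt_eq_cfc]
  exact h.cfc_nnreal _

theorem star_sqrt (x : B) : star (CFC.sqrt x) = CFC.sqrt x :=
  IsSelfAdjoint.of_nonneg (CFC.sqrt_nonneg x)

theorem sqrt_mem_relativeCommutant {A : StarSubalgebra ℂ B} {c : B}
    (hc : c ∈ relativeCommutant A) : CFC.sqrt c ∈ relativeCommutant A :=
  mem_relativeCommutant_iff.2 fun _ ha => commute_sqrt (commute_of_mem_relativeCommutant hc ha)

open scoped ComplexOrder in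
theorem smul_one_eq_norm_smul_one {z : ℂ} (hz : 0 ≤ z • (1 : B)) :
    z • (1 : B) = ‖z • (1 : B)‖ • (1 : B) := by
  rcases subsingleton_or_nontrivial B with _ | _
  · exact Subsingleton.elim _ _
  have hz0 : 0 ≤ z :=
    spectrum_nonneg_of_nonneg hz (by simp [← Algebra.algebraMap_eq_smul_one])
  rw [norm_smul, norm_one, mul_one, ← Complex.coe_smul]
  exact congrArg (· • (1 : B)) (RCLike.norm_of_nonneg' hz0).symm

theorem star_mul_self_le_smul_one_of_mul_star_self_le {x : B} {r : ℝ} (hr : 0 ≤ r)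
    (h : x * star x ≤ r • 1) : star x * x ≤ r • 1 := by
  rw [← Algebra.algebraMap_eq_smul_one] at h ⊢
  rw [← CStarAlgebra.norm_le_iff_le_algebraMap _ hr (star_mul_self_nonneg x),
    CStarRing.norm_star_mul_self, ← CStarRing.norm_self_mul_star]
  exact (CStarAlgebra.norm_le_iff_le_algebraMap _ hr (mul_star_self_nonneg x)).2 h

theorem quasiBasisIndex_nonneg {ι : Type*} [Fintype ι] (u : ι → B) : 0 ≤ quasiBasisIndex u :=
  Finset.sum_nonneg fun j _ => mul_star_self_nonneg (u j)

theorem exists_pos_quasiBasisIndex_le {ι : Type*} [Fintype ι] (u : ι → B) :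
    ∃ t : ℝ, 0 < t ∧ quasiBasisIndex u ≤ t • 1 := by
  refine ⟨‖quasiBasisIndex u‖ + 1, by positivity, ?_⟩
  rw [← Algebra.algebraMap_eq_smul_one]
  exact (CStarAlgebra.norm_le_iff_le_algebraMap _ (by positivity) (quasiBasisIndex_nonneg u)).1
    (le_add_of_nonneg_right zero_le_one)

-- Expand `0 ≤ ∑ (t aⱼ - uⱼ* x)* (t aⱼ - uⱼ* x)` with `x = ∑ uⱼ aⱼ`.
theorem star_sum_mul_self_le_of_quasiBasisIndex_le {ι : Type*} [Fintype ι] {u : ι → B} {t : ℝ}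
    (ht : 0 < t) (hu : quasiBasisIndex u ≤ t • 1) (a : ι → B) :
    star (∑ j, u j * a j) * ∑ j, u j * a j ≤ t • ∑ j, star (a j) * a j := by
  set x := ∑ j, u j * a j with hx
  have hxx : ∑ j, star (a j) * (star (u j) * x) = star x * x := by
    conv_rhs => rw [hx, star_sum, Finset.sum_mul]
    exact Finset.sum_congr rfl fun j _ => by rw [star_mul, mul_assoc]
  have hxx' : ∑ j, star x * u j * a j = star x * x := by
    conv_rhs => rw [hx, Finset.mul_sum]
    simp only [mul_assoc, hx]
  have hxIx : ∑ j, star x * u j * (star (u j) * x) ≤ t • (star x * x) := by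
    calc ∑ j, star x * u j * (star (u j) * x) = star x * quasiBasisIndex u * x := by
          simp only [quasiBasisIndex, Finset.mul_sum, Finset.sum_mul, mul_assoc]
      _ ≤ star x * (t • 1) * x := star_left_conjugate_le_conjugate hu x
      _ = t • (star x * x) := by simp
  have hsquares : 0 ≤ t • (t • ∑ j, star (a j) * a j - star x * x) := by
    calc 0 ≤ ∑ j, star (t • a j - star (u j) * x) * (t • a j - star (u j) * x) :=
          Finset.sum_nonneg fun j _ => star_mul_self_nonneg _
      _ = t • t • ∑ j, star (a j) * a j - t • (star x * x) - t • (star x * x)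
            + ∑ j, star x * u j * (star (u j) * x) := by
          nth_rw 1 [← hxx]
          rw [← hxx']
          simp only [Finset.smul_sum, ← Finset.sum_sub_distrib, ← Finset.sum_add_distrib]
          refine Finset.sum_congr rfl fun j _ => ?_
          simp only [star_sub, star_smul, star_mul, star_star, sub_mul, mul_sub, smul_mul_assoc,
            mul_smul_comm, smul_sub, star_trivial]
          abel
      _ ≤ t • t • ∑ j, star (a j) * a j - t • (star x * x) - t • (star x * x)
            + t • (star x * x) := by gcongr
      _ = t • (t • ∑ j, star (a j) * a j - star x * x) := by rw [smul_sub]; abel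
  exact sub_nonneg.1 ((smul_nonneg_iff_nonneg_of_pos_left ht).1 hsquares)

end Order

namespace IsPositiveBimoduleMap

variable {B : Type*} [CStarAlgebra B] [PartialOrder B] [StarOrderedRing B]
  {A : StarSubalgebra ℂ B} {E : B →ₗ[ℂ] B} {ι : Type*} [Fintype ι]

theorem map_star (hE : IsPositiveBimoduleMap A E) (x : B) : E (star x) = star (E x) :=
  StarHomClass.map_star (PositiveLinearMap.mk₀ E hE.map_nonneg) x

theorem map_mul_right (hE : IsPositiveBimoduleMap A E) {a : B} (ha : a ∈ A) (x : B) :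
    E (x * a) = E x * a := by
  rw [← star_inj, ← hE.map_star, star_mul, hE.map_mul_left _ (star_mem ha), hE.map_star, star_mul]

theorem map_mono (hE : IsPositiveBimoduleMap A E) {x y : B} (h : x ≤ y) : E x ≤ E y := by
  simpa using hE.map_nonneg _ (sub_nonneg.2 h)

theorem map_mem_relativeCommutant (hE : IsPositiveBimoduleMap A E) {c : B}
    (hc : c ∈ relativeCommutant A) : E c ∈ relativeCommutant A :=
  mem_relativeCommutant_iff.2 fun a ha => by
    rw [commute_iff_eq, ← hE.map_mul_right ha, (commute_of_mem_relativeCommutant hc ha).eq,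
      hE.map_mul_left a ha]

theorem exists_map_eq_smul_one [Algebra.IsCentral ℂ A] (hE : IsPositiveBimoduleMap A E) {c : B}
    (hc : c ∈ relativeCommutant A) : ∃ z : ℂ, E c = z • 1 := by
  have hcenter : (⟨E c, hE.map_mem c⟩ : A) ∈ Subalgebra.center ℂ A :=
    Subalgebra.mem_center_iff.2 fun a => Subtype.ext
      (commute_of_mem_relativeCommutant (hE.map_mem_relativeCommutant hc) a.2).symm.eq
  obtain ⟨z, hz⟩ := (Algebra.IsCentral.mem_center_iff ℂ).1 hcenter
  exact ⟨z, (congrArg Subtype.val hz).trans (Algebra.algebraMap_eq_smul_one z)⟩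

theorem map_eq_norm_smul_one [Algebra.IsCentral ℂ A] (hE : IsPositiveBimoduleMap A E) {c : B}
    (hc : c ∈ relativeCommutant A) (hc0 : 0 ≤ c) : E c = ‖E c‖ • 1 := by
  obtain ⟨z, hz⟩ := hE.exists_map_eq_smul_one hc
  have := hE.map_nonneg c hc0
  rw [hz] at this ⊢
  exact smul_one_eq_norm_smul_one this

theorem reconstruction_mul_right (hE : IsPositiveBimoduleMap A E) (u : ι → B) {a : B} (ha : a ∈ A)
    (x : B) : reconstruction E u (x * a) = reconstruction E u x * a := by
  simp only [reconstruction_apply, Finset.sum_mul, ← mul_assoc, hE.map_mul_right ha]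

theorem star_reconstruction (hE : IsPositiveBimoduleMap A E) (u : ι → B) (x : B) :
    star (reconstruction E u x) = ∑ j, E (star x * u j) * star (u j) := by
  simp only [reconstruction_apply, star_sum, star_mul, ← hE.map_star, star_star]

theorem reconstruction_mem_relativeCommutant (hE : IsPositiveBimoduleMap A E) {e : ι → B}
    (he : ∀ i, e i ∈ relativeCommutant A) {x : B} (hx : x ∈ relativeCommutant A) :
    reconstruction E e x ∈ relativeCommutant A := by
  rw [reconstruction_apply]
  exact sum_mem fun i _ =>
    mul_mem (he i) (hE.map_mem_relativeCommutant (mul_mem (star_mem (he i)) hx))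

end IsPositiveBimoduleMap

namespace IsQuasiBasis

variable {B : Type*} [CStarAlgebra B] [PartialOrder B] [StarOrderedRing B]
  {A : StarSubalgebra ℂ B} {E : B →ₗ[ℂ] B} {ι κ : Type*} [Fintype ι] [Fintype κ] {u : ι → B}

theorem sum_map_mul_star (hE : IsPositiveBimoduleMap A E) (hu : IsQuasiBasis E u) (b : B) :
    ∑ j, E (b * u j) * star (u j) = b := by
  simpa [hu (star b)] using (hE.star_reconstruction u (star b)).symm

-- The Pimsner–Popa inequality.
theorem star_mul_self_le_smul_map (hE : IsPositiveBimoduleMap A E) (hu : IsQuasiBasis E u) {t : ℝ}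
    (ht : 0 < t) (hut : quasiBasisIndex u ≤ t • 1) (x : B) :
    star x * x ≤ t • E (star x * x) := by
  have hsum : ∑ j, star (E (star (u j) * x)) * E (star (u j) * x) = E (star x * x) := by
    calc _ = E (star x * reconstruction E u x) := by
          simp only [reconstruction_apply, Finset.mul_sum, map_sum, ← mul_assoc,
            hE.map_mul_right (hE.map_mem _), ← hE.map_star, star_mul, star_star]
      _ = E (star x * x) := by rw [hu x]
  have hle := star_sum_mul_self_le_of_quasiBasisIndex_le ht hut fun j => E (star (u j) * x)
  rwa [← reconstruction_apply, hu x, hsum] at hle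

theorem isFaithful (hE : IsPositiveBimoduleMap A E) (hu : IsQuasiBasis E u) : IsFaithful E := by
  intro x hx
  obtain ⟨t, ht, hut⟩ := exists_pos_quasiBasisIndex_le u
  have hle := hu.star_mul_self_le_smul_map hE ht hut x
  rw [hx, smul_zero] at hle
  exact (CStarRing.star_mul_self_eq_zero_iff x).1 (hle.antisymm (star_mul_self_nonneg x))

theorem commute_quasiBasisIndex (hE : IsPositiveBimoduleMap A E) (hu : IsQuasiBasis E u) (b : B) :
    Commute (quasiBasisIndex u) b := by
  refine Commute.symm ?_
  calc b * quasiBasisIndex u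
      = ∑ j, reconstruction E u (b * u j) * star (u j) := by
        simp only [hu _, quasiBasisIndex, Finset.mul_sum, mul_assoc]
    _ = ∑ i, u i * ∑ j, E (star (u i) * b * u j) * star (u j) := by
        simp only [reconstruction_apply, Finset.sum_mul, Finset.mul_sum, mul_assoc]
        exact Finset.sum_comm
    _ = quasiBasisIndex u * b := by
        simp only [hu.sum_map_mul_star hE]
        simp only [quasiBasisIndex, Finset.sum_mul, mul_assoc]

theorem quasiBasisIndex_mem_relativeCommutant (hE : IsPositiveBimoduleMap A E)
    (hu : IsQuasiBasis E u) : quasiBasisIndex u ∈ relativeCommutant A :=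
  mem_relativeCommutant_iff.2 fun a _ => hu.commute_quasiBasisIndex hE a

theorem sum_mul_star_reconstruction (hE : IsPositiveBimoduleMap A E) (hu : IsQuasiBasis E u)
    {T : B →ₗ[ℂ] B} (hT : ∀ a ∈ A, ∀ x, T (x * a) = T x * a) (e : κ → B) :
    ∑ j, T (u j) * star (reconstruction E e (u j)) = ∑ i, T (e i) * star (e i) := by
  calc ∑ j, T (u j) * star (reconstruction E e (u j))
      = ∑ i, T (reconstruction E u (e i)) * star (e i) := by
        simp only [hE.star_reconstruction, Finset.mul_sum]
        simp only [reconstruction_apply, map_sum, hT _ (hE.map_mem _), Finset.sum_mul, mul_assoc]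
        exact Finset.sum_comm
    _ = ∑ i, T (e i) * star (e i) := by simp only [hu _]

end IsQuasiBasis

section Orthonormal

variable {B : Type*} [CStarAlgebra B] [PartialOrder B] [StarOrderedRing B]
  {A : StarSubalgebra ℂ B} {E : B →ₗ[ℂ] B} {ι κ : Type*} [Fintype ι] [Fintype κ] [DecidableEq κ]
  {u : ι → B} {e : κ → B}

theorem IsOrthonormalFamily.map_star_mul_reconstruction (hE : IsPositiveBimoduleMap A E)
    (he : IsOrthonormalFamily E e) (k : κ) (x : B) :
    E (star (e k) * reconstruction E e x) = E (star (e k) * x) := by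
  simp only [reconstruction_apply, Finset.mul_sum, map_sum, ← mul_assoc,
    hE.map_mul_right (hE.map_mem _), he k, ite_mul, one_mul, zero_mul, Finset.sum_ite_eq,
    Finset.mem_univ, if_true]

-- Bessel's inequality: with `p` the reconstruction along `e`, the difference of the two sides is
-- `∑ (uⱼ - p uⱼ) (uⱼ - p uⱼ)*`.
theorem IsOrthonormalFamily.quasiBasisIndex_le (hE : IsPositiveBimoduleMap A E)
    (hu : IsQuasiBasis E u) (he : IsOrthonormalFamily E e) :
    quasiBasisIndex e ≤ quasiBasisIndex u := by
  let p := reconstruction E e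
  let q : B →ₗ[ℂ] B := LinearMap.id - p
  have hq : ∀ a ∈ A, ∀ x, q (x * a) = q x * a := fun a ha x => by
    simp [q, p, hE.reconstruction_mul_right e ha, sub_mul]
  have hup : ∑ j, u j * star (p (u j)) = quasiBasisIndex e :=
    hu.sum_mul_star_reconstruction hE (T := LinearMap.id) (fun _ _ _ => rfl) e
  have hpu : ∑ j, p (u j) * star (u j) = quasiBasisIndex e := by
    have := congrArg star hup
    simpa [quasiBasisIndex, star_sum] using this
  have hqp : ∑ j, (u j - p (u j)) * star (p (u j)) = 0 := by
    refine (hu.sum_mul_star_reconstruction hE hq e).trans (Finset.sum_eq_zero fun i _ => ?_)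
    simp [q, p, he.reconstruction_self i]
  rw [← sub_nonneg]
  calc 0 ≤ ∑ j, (u j - p (u j)) * star (u j - p (u j)) :=
        Finset.sum_nonneg fun j _ => mul_star_self_nonneg _
    _ = ∑ j, u j * star (u j) - ∑ j, p (u j) * star (u j)
          - ∑ j, (u j - p (u j)) * star (p (u j)) := by
        simp only [← Finset.sum_sub_distrib]
        exact Finset.sum_congr rfl fun j _ => by rw [star_sub, mul_sub, sub_mul]
    _ = quasiBasisIndex u - quasiBasisIndex e := by rw [hpu, hqp, sub_zero]; rfl

theorem IsPositiveBimoduleMap.exists_smul_normalized [Algebra.IsCentral ℂ A]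
    (hE : IsPositiveBimoduleMap A E) (hfaithful : IsFaithful E) {c : B}
    (hc : c ∈ relativeCommutant A) (hc0 : c ≠ 0) :
    ∃ a : ℝ, a ≠ 0 ∧ E (star (a • c) * (a • c)) = 1 := by
  set r := ‖E (star c * c)‖
  have hr : E (star c * c) = r • 1 :=
    hE.map_eq_norm_smul_one (mul_mem (star_mem hc) hc) (star_mul_self_nonneg c)
  have hr0 : 0 < r := norm_pos_iff.2 (mt (hfaithful c) hc0)
  refine ⟨(√r)⁻¹, by positivity, ?_⟩
  rw [star_smul, star_trivial, smul_mul_smul_comm, LinearMap.map_smul_of_tower, hr, smul_smul,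
    ← mul_inv, Real.mul_self_sqrt hr0.le, inv_mul_cancel₀ hr0.ne', one_smul]

theorem IsQuasiBasis.isUnit_quasiBasisIndex [Nontrivial B] [Algebra.IsCentral ℂ A]
    (hE : IsPositiveBimoduleMap A E) (hu : IsQuasiBasis E u) : IsUnit (quasiBasisIndex u) := by
  obtain ⟨a, ha, hnorm⟩ :=
    hE.exists_smul_normalized (hu.isFaithful hE) (one_mem (relativeCommutant A)) one_ne_zero
  have hsingle : IsOrthonormalFamily E fun _ : Unit => a • (1 : B) :=
    fun _ _ => by simpa using hnorm
  have hle : (a * a) • (1 : B) ≤ quasiBasisIndex u := by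
    simpa [quasiBasisIndex, smul_smul] using hsingle.quasiBasisIndex_le hE hu
  have hpos : IsStrictlyPositive ((a * a) • (1 : B)) := by
    refine ⟨smul_nonneg (mul_self_nonneg a) zero_le_one, ?_⟩
    rw [← Algebra.algebraMap_eq_smul_one]
    exact (IsUnit.mk0 _ (mul_self_ne_zero.2 ha)).map (algebraMap ℝ B)
  exact CStarAlgebra.isUnit_of_le _ hle hpos

theorem IsQuasiBasis.map_star_mul_self_le_smul_map_mul_star_self [Algebra.IsCentral ℂ A]
    (hE : IsConditionalExpectation A E) (hu : IsQuasiBasis E u) {t : ℝ} (ht : 0 < t)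
    (hut : quasiBasisIndex u ≤ t • 1) {c : B} (hc : c ∈ relativeCommutant A) :
    E (star c * c) ≤ t • E (c * star c) := by
  have hscalar := hE.map_eq_norm_smul_one (mul_mem hc (star_mem hc)) (mul_star_self_nonneg c)
  have hle : c * star c ≤ (t * ‖E (c * star c)‖) • 1 := by
    simpa [hscalar.symm, mul_smul] using
      hu.star_mul_self_le_smul_map hE.toIsPositiveBimoduleMap ht hut (star c)
  calc E (star c * c) ≤ E ((t * ‖E (c * star c)‖) • 1) :=
        hE.map_mono (star_mul_self_le_smul_one_of_mul_star_self_le (by positivity) hle)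
    _ = t • E (c * star c) := by
        rw [LinearMap.map_smul_of_tower, hE.map_one, mul_smul, ← hscalar]

theorem IsOrthonormalFamily.card_le_sq [Nontrivial B] [Algebra.IsCentral ℂ A]
    (hE : IsConditionalExpectation A E) (hu : IsQuasiBasis E u) {t : ℝ} (ht : 0 < t)
    (hut : quasiBasisIndex u ≤ t • 1) (he : IsOrthonormalFamily E e)
    (hmem : ∀ k, e k ∈ relativeCommutant A) : (Fintype.card κ : ℝ) ≤ t ^ 2 := by
  refine (smul_le_smul_iff_of_pos_right (zero_lt_one (α := B))).1 ?_
  calc (Fintype.card κ : ℝ) • (1 : B) = ∑ k, E (star (e k) * e k) := by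
        simp [he _ _, Nat.cast_smul_eq_nsmul]
    _ ≤ ∑ k, t • E (e k * star (e k)) := Finset.sum_le_sum fun k _ =>
        hu.map_star_mul_self_le_smul_map_mul_star_self hE ht hut (hmem k)
    _ = t • E (quasiBasisIndex e) := by rw [quasiBasisIndex, map_sum, Finset.smul_sum]
    _ ≤ t • E (t • 1) := smul_le_smul_of_nonneg_left
        (hE.map_mono ((he.quasiBasisIndex_le hE.toIsPositiveBimoduleMap hu).trans hut)) ht.le
    _ = t ^ 2 • (1 : B) := by
        rw [LinearMap.map_smul_of_tower, hE.map_one, smul_smul, sq]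

theorem IsOrthonormalFamily.exists_extension [Algebra.IsCentral ℂ A]
    (hE : IsPositiveBimoduleMap A E) (hfaithful : IsFaithful E) {m : ℕ} {e : Fin m → B}
    (he : IsOrthonormalFamily E e) (hmem : ∀ k, e k ∈ relativeCommutant A) {x : B}
    (hx : x ∈ relativeCommutant A) (hne : reconstruction E e x ≠ x) :
    ∃ e' : Fin (m + 1) → B, IsOrthonormalFamily E e' ∧ ∀ k, e' k ∈ relativeCommutant A := by
  set y := x - reconstruction E e x with hy
  have hyC : y ∈ relativeCommutant A :=
    sub_mem hx (hE.reconstruction_mem_relativeCommutant hmem hx)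
  have hey (k) : E (star (e k) * y) = 0 := by
    rw [hy, mul_sub, map_sub, he.map_star_mul_reconstruction hE, sub_self]
  have hye (k) : E (star y * e k) = 0 := by
    simpa [hey k] using hE.map_star (star (e k) * y)
  obtain ⟨a, -, ha⟩ := hE.exists_smul_normalized hfaithful hyC (sub_ne_zero.2 hne.symm)
  refine ⟨Fin.cons (a • y) e, ?_, Fin.cases ?_ ?_⟩
  · refine Fin.cases (Fin.cases ?_ fun l => ?_) fun k => Fin.cases ?_ fun l => ?_
    · simpa using ha
    · simp [LinearMap.map_smul_of_tower, hye, (Fin.succ_ne_zero l).symm]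
    · simp [LinearMap.map_smul_of_tower, hey, Fin.succ_ne_zero k]
    · simpa using he k l
  · simpa using (relativeCommutant A).smul_mem hyC (a : ℂ)
  · exact hmem

theorem IsQuasiBasis.exists_basis_relativeCommutant [Nontrivial B] [Algebra.IsCentral ℂ A]
    (hE : IsConditionalExpectation A E) (hu : IsQuasiBasis E u) :
    ∃ (m : ℕ) (e : Fin m → B), (∀ k, e k ∈ relativeCommutant A) ∧
      ∀ x ∈ relativeCommutant A, reconstruction E e x = x := by
  by_contra! hnot
  have horthonormal (m : ℕ) : ∃ e : Fin m → B,
      IsOrthonormalFamily E e ∧ ∀ k, e k ∈ relativeCommutant A := by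
    induction m with
    | zero => exact ⟨Fin.elim0, fun k => k.elim0, fun k => k.elim0⟩
    | succ m ih =>
      obtain ⟨e, he, hmem⟩ := ih
      obtain ⟨x, hx, hne⟩ := hnot m e hmem
      exact he.exists_extension hE.toIsPositiveBimoduleMap
        (hu.isFaithful hE.toIsPositiveBimoduleMap) hmem hx hne
  obtain ⟨t, ht, hut⟩ := exists_pos_quasiBasisIndex_le u
  obtain ⟨m, hm⟩ := exists_nat_gt (t ^ 2)
  obtain ⟨e, he, hmem⟩ := horthonormal m
  exact hm.not_ge (by simpa using he.card_le_sq hE hu ht hut hmem)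

end Orthonormal

section CompressionSum

variable {B : Type*} [CStarAlgebra B] [PartialOrder B] [StarOrderedRing B]
  {A : StarSubalgebra ℂ B} {E : B →ₗ[ℂ] B} {ι κ : Type*} [Fintype ι] [Fintype κ]
  {u : ι → B} {e : κ → B}

theorem isPositiveBimoduleMap_compressionSum (hE : IsPositiveBimoduleMap A E)
    (hmem : ∀ k, e k ∈ relativeCommutant A) : IsPositiveBimoduleMap A (compressionSum E e) where
  map_mem x := by
    rw [compressionSum_apply]
    exact sum_mem fun k _ => hE.map_mem _
  map_mul_left a ha x := by
    simp only [compressionSum_apply, Finset.mul_sum, ← hE.map_mul_left a ha, ← mul_assoc,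
      (commute_of_mem_relativeCommutant (star_mem (hmem _)) ha).eq]
  map_nonneg x hx := by
    rw [compressionSum_apply]
    exact Finset.sum_nonneg fun k _ => hE.map_nonneg _ (star_left_conjugate_nonneg hx (e k))

-- Multiplication by `c` has matrix `aₖᵢ = E(eₖ* c eᵢ)` in the basis `e`, and its entries commute
-- with the values of `E`.
theorem isRelativelyTracial_compressionSum (hE : IsPositiveBimoduleMap A E)
    (hmem : ∀ k, e k ∈ relativeCommutant A)
    (hbasis : ∀ x ∈ relativeCommutant A, reconstruction E e x = x) :
    IsRelativelyTracial A (compressionSum E e) := by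
  intro c hc b
  have hmul (i) : c * e i = ∑ k, e k * E (star (e k) * (c * e i)) := by
    rw [← reconstruction_apply, hbasis _ (mul_mem hc (hmem i))]
  have hstar_mul (i) : star (e i) * c = ∑ k, E (star (e i) * c * e k) * star (e k) := by
    have hx : star c * e i ∈ relativeCommutant A := mul_mem (star_mem hc) (hmem i)
    have := hE.star_reconstruction e (star c * e i)
    rwa [hbasis _ hx, star_mul, star_star] at this
  calc compressionSum E e (c * b)
      = ∑ i, ∑ k, E (star (e i) * c * e k) * E (star (e k) * b * e i) := by
        rw [compressionSum_apply]
        refine Finset.sum_congr rfl fun i _ => ?_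
        conv_lhs => rw [← mul_assoc, hstar_mul, Finset.sum_mul, Finset.sum_mul, map_sum]
        exact Finset.sum_congr rfl fun k _ => by
          rw [mul_assoc, mul_assoc, hE.map_mul_left _ (hE.map_mem _), ← mul_assoc (star (e k))]
    _ = ∑ i, ∑ k, E (star (e k) * b * e i) * E (star (e i) * c * e k) := by
        refine Finset.sum_congr rfl fun i _ => Finset.sum_congr rfl fun k _ => ?_
        exact commute_of_mem_relativeCommutant (hE.map_mem_relativeCommutant
          (mul_mem (mul_mem (star_mem (hmem i)) hc) (hmem k))) (hE.map_mem _)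
    _ = compressionSum E e (b * c) := by
        rw [compressionSum_apply, Finset.sum_comm]
        refine Finset.sum_congr rfl fun i _ => ?_
        rw [mul_assoc, mul_assoc, hmul, Finset.mul_sum, Finset.mul_sum, map_sum]
        exact Finset.sum_congr rfl fun k _ => by
          rw [← mul_assoc, ← mul_assoc, hE.map_mul_right (hE.map_mem _), ← mul_assoc (star (e k))]

theorem isFaithful_compressionSum (hE : IsPositiveBimoduleMap A E) (hfaithful : IsFaithful E)
    (hone : reconstruction E e 1 = 1) : IsFaithful (compressionSum E e) := by
  intro x hx
  have hterm (k) : E (star (x * e k) * (x * e k)) = 0 := by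
    simp only [compressionSum_apply] at hx
    rw [Finset.sum_eq_zero_iff_of_nonneg fun k _ => hE.map_nonneg _
      (star_left_conjugate_nonneg (star_mul_self_nonneg x) (e k))] at hx
    simpa only [star_mul, mul_assoc] using hx k (Finset.mem_univ k)
  calc x = x * reconstruction E e 1 := by rw [hone, mul_one]
    _ = ∑ k, x * e k * E (star (e k) * 1) := by
        simp only [reconstruction_apply, Finset.mul_sum, mul_assoc]
    _ = 0 := Finset.sum_eq_zero fun k _ => by rw [hfaithful _ (hterm k), zero_mul]

theorem IsQuasiBasis.exists_modular_element (hE : IsPositiveBimoduleMap A E)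
    (hu : IsQuasiBasis E u) {c : B} (hc : c ∈ relativeCommutant A) :
    ∃ θ ∈ relativeCommutant A, ∀ b, E (c * b) = E (b * θ) := by
  set θ := ∑ j, u j * E (c * star (u j)) with hθ
  have hmodular (b : B) : E (c * b) = E (b * θ) := by
    conv_lhs => rw [← hu.sum_map_mul_star hE b]
    simp only [hθ, Finset.mul_sum, map_sum]
    refine Finset.sum_congr rfl fun j _ => ?_
    rw [(commute_of_mem_relativeCommutant hc (hE.map_mem _)).left_comm,
      hE.map_mul_left _ (hE.map_mem _), ← mul_assoc, hE.map_mul_right (hE.map_mem _)]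
  refine ⟨θ, mem_relativeCommutant_iff.2 fun a ha => ?_, hmodular⟩
  refine (hu.isFaithful hE).eq_of_forall_map_mul_eq fun b => ?_
  rw [← mul_assoc, ← mul_assoc, hE.map_mul_right ha, ← hmodular, ← hmodular, ← mul_assoc,
    hE.map_mul_right ha]

theorem IsQuasiBasis.exists_compressionSum_eq_map_mul (hE : IsPositiveBimoduleMap A E)
    (hu : IsQuasiBasis E u) (hmem : ∀ k, e k ∈ relativeCommutant A) :
    ∃ d ∈ relativeCommutant A, ∀ b, compressionSum E e b = E (b * d) := by
  choose θ hθmem hθ using fun k => hu.exists_modular_element hE (star_mem (hmem k))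
  refine ⟨∑ k, e k * θ k, sum_mem fun k _ => mul_mem (hmem k) (hθmem k), fun b => ?_⟩
  simp only [compressionSum_apply, Finset.mul_sum, map_sum, mul_assoc, hθ]

theorem finiteDimensional_relativeCommutant [Algebra.IsCentral ℂ A]
    (hE : IsPositiveBimoduleMap A E) (hmem : ∀ k, e k ∈ relativeCommutant A)
    (hbasis : ∀ x ∈ relativeCommutant A, reconstruction E e x = x) :
    FiniteDimensional ℂ (relativeCommutant A) := by
  have hle : (relativeCommutant A).toSubalgebra.toSubmodule ≤ Submodule.span ℂ (Set.range e) := by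
    intro x hx
    rw [← hbasis x hx, reconstruction_apply]
    refine sum_mem fun k _ => ?_
    obtain ⟨z, hz⟩ := hE.exists_map_eq_smul_one (mul_mem (star_mem (hmem k)) hx)
    rw [hz, mul_smul_one]
    exact Submodule.smul_mem _ z (Submodule.subset_span ⟨k, rfl⟩)
  have : FiniteDimensional ℂ (Submodule.span ℂ (Set.range e)) :=
    FiniteDimensional.span_of_finite ℂ (Set.finite_range e)
  exact Submodule.finiteDimensional_of_le hle

end CompressionSum

theorem isUnit_of_forall_mul_eq_zero {K R : Type*} [Field K] [Ring R] [Algebra K R]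
    [FiniteDimensional K R] {d : R} (hd : ∀ y, y * d = 0 → y = 0) : IsUnit d := by
  have := IsArtinianRing.of_finite K R
  exact IsArtinianRing.isUnit_iff_isRightRegular.2 (isRightRegular_of_non_zero_divisor d hd)

section Density

variable {B : Type*} [CStarAlgebra B] [PartialOrder B] [StarOrderedRing B]
  {A : StarSubalgebra ℂ B} {G : B →ₗ[ℂ] B} {ι : Type*} [Fintype ι] {u : ι → B} {g : B}

theorem IsRelativelyTracial.isSelfAdjoint_density (hG : IsPositiveBimoduleMap A G)
    (htr : IsRelativelyTracial A G) (hfaithful : IsFaithful G) (hg : g ∈ relativeCommutant A)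
    (hpos : IsPositiveBimoduleMap A (withDensity G g)) : IsSelfAdjoint g := by
  refine hfaithful.eq_of_forall_map_mul_eq fun b => ?_
  calc G (b * star g) = star (withDensity G g (star b)) := by
        rw [withDensity_apply, ← hG.map_star, star_mul, star_star]
    _ = G (b * g) := by rw [← hpos.map_star, star_star, withDensity_apply, htr g hg]

theorem IsRelativelyTracial.density_nonneg (hG : IsPositiveBimoduleMap A G)
    (htr : IsRelativelyTracial A G) (hfaithful : IsFaithful G) (hg : g ∈ relativeCommutant A)
    (hpos : IsPositiveBimoduleMap A (withDensity G g)) : 0 ≤ g := by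
  have hsa : IsSelfAdjoint g := htr.isSelfAdjoint_density hG hfaithful hg hpos
  have hneg : star g⁻ = g⁻ := IsSelfAdjoint.of_nonneg (CFC.negPart_nonneg g)
  have hmul : g * g⁻ = -(star g⁻ * g⁻) := by
    conv_lhs => enter [1]; rw [← CFC.posPart_sub_negPart g hsa]
    rw [sub_mul, CFC.posPart_mul_negPart, zero_sub, hneg]
  have hle : 0 ≤ -G (star g⁻ * g⁻) := by
    rw [← map_neg, ← hmul]
    exact hpos.map_nonneg _ (CFC.negPart_nonneg g)
  have hzero : G (star g⁻ * g⁻) = 0 :=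
    (neg_nonneg.1 hle).antisymm (hG.map_nonneg _ (star_mul_self_nonneg _))
  exact (CFC.negPart_eq_zero_iff g hsa).1 (hfaithful _ hzero)

theorem IsQuasiBasis.mul_sqrt_of_withDensity (hG : IsPositiveBimoduleMap A G)
    (htr : IsRelativelyTracial A G) (hg : g ∈ relativeCommutant A) (hg0 : 0 ≤ g)
    (hunit : IsUnit g) (hu : IsQuasiBasis (withDensity G g) u) :
    IsQuasiBasis G fun j => u j * CFC.sqrt g := by
  intro b
  obtain ⟨s, hs⟩ := (CFC.isUnit_sqrt_iff g hg0).2 hunit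
  have hsC : (s : B) ∈ relativeCommutant A := hs ▸ sqrt_mem_relativeCommutant hg
  have hss : (s * s : B) = g := hs ▸ CFC.sqrt_mul_sqrt_self g hg0
  have hstar : star (s : B) = s := hs ▸ star_sqrt g
  have hcoeff (j) : G (s * (star (u j) * b)) = withDensity G g (star (u j) * (b * ↑s⁻¹)) := by
    rw [withDensity_apply, ← hss, mul_assoc (s : B) (s : B), htr s hsC (s * _)]
    simp only [mul_assoc, Units.inv_mul, mul_one]
  calc reconstruction G (fun j => u j * CFC.sqrt g) b
      = ∑ j, u j * (s * G (s * (star (u j) * b))) := by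
        simp only [reconstruction_apply, ← hs, star_mul, hstar, mul_assoc]
    _ = reconstruction (withDensity G g) u (b * ↑s⁻¹) * s := by
        simp only [(commute_of_mem_relativeCommutant hsC (hG.map_mem _)).eq]
        simp only [hcoeff, reconstruction_apply, Finset.sum_mul, mul_assoc]
    _ = b := by rw [hu, Units.inv_mul_cancel_right]

theorem isPositiveBimoduleMap_withDensity (hG : IsPositiveBimoduleMap A G)
    (htr : IsRelativelyTracial A G) (hg : g ∈ relativeCommutant A) (hg0 : 0 ≤ g) :
    IsPositiveBimoduleMap A (withDensity G g) where
  map_mem x := hG.map_mem _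
  map_mul_left a ha x := by
    rw [withDensity_apply, (commute_of_mem_relativeCommutant hg ha).left_comm,
      hG.map_mul_left a ha, withDensity_apply]
  map_nonneg x hx := by
    rw [withDensity_apply, ← CFC.sqrt_mul_sqrt_self g hg0, mul_assoc,
      htr _ (sqrt_mem_relativeCommutant hg)]
    refine hG.map_nonneg _ ?_
    simpa only [star_sqrt] using star_left_conjugate_nonneg hx (CFC.sqrt g)

theorem quasiBasisIndex_mul_sqrt (hg0 : 0 ≤ g) (hcentral : ∀ b, Commute g b) (u : ι → B) :
    quasiBasisIndex (fun j => u j * CFC.sqrt g) = g * quasiBasisIndex u := by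
  simp only [quasiBasisIndex, Finset.mul_sum, star_mul, star_sqrt]
  refine Finset.sum_congr rfl fun j _ => ?_
  rw [mul_assoc, ← mul_assoc (CFC.sqrt g), CFC.sqrt_mul_sqrt_self g hg0, (hcentral _).left_comm]

end Density

section Pseudominimal

variable {B : Type*} [CStarAlgebra B] [PartialOrder B] [StarOrderedRing B]
  {A : StarSubalgebra ℂ B} {E : B →ₗ[ℂ] B} {ι : Type*} [Fintype ι] {u : ι → B}

theorem IsQuasiBasis.exists_isRelativelyTracial [Nontrivial B] [Algebra.IsCentral ℂ A]
    (hE : IsConditionalExpectation A E) (hu : IsQuasiBasis E u) :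
    ∃ G : B →ₗ[ℂ] B, IsPositiveBimoduleMap A G ∧ IsRelativelyTracial A G ∧
      ∃ w : ι → B, IsQuasiBasis G w := by
  obtain ⟨m, e, hmem, hbasis⟩ := hu.exists_basis_relativeCommutant hE
  replace hE := hE.toIsPositiveBimoduleMap
  set G := compressionSum E e
  have hG : IsPositiveBimoduleMap A G := isPositiveBimoduleMap_compressionSum hE hmem
  have htr : IsRelativelyTracial A G := isRelativelyTracial_compressionSum hE hmem hbasis
  have hfaithful : IsFaithful G :=
    isFaithful_compressionSum hE (hu.isFaithful hE) (hbasis 1 (one_mem _))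
  obtain ⟨d, hd, hGd⟩ := hu.exists_compressionSum_eq_map_mul hE hmem
  have := finiteDimensional_relativeCommutant hE hmem hbasis
  have hregular (y : relativeCommutant A) (hy : y * ⟨d, hd⟩ = 0) : y = 0 := by
    have hyd : (y : B) * d = 0 := congrArg Subtype.val hy
    exact Subtype.ext (hfaithful y (by rw [hGd, mul_assoc, hyd, mul_zero, map_zero]))
  obtain ⟨v, hv⟩ := isUnit_of_forall_mul_eq_zero (K := ℂ) hregular
  set g : relativeCommutant A := ↑v⁻¹
  have hgd : (g : B) * d = 1 := congrArg Subtype.val (hv ▸ v.inv_mul)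
  have hunit : IsUnit (g : B) := v⁻¹.isUnit.map (relativeCommutant A).subtype
  have hEG : withDensity G g = E := LinearMap.ext fun b => by
    rw [withDensity_apply, htr g g.2, hGd, mul_assoc, hgd, mul_one]
  have hg0 : 0 ≤ (g : B) := htr.density_nonneg hG hfaithful g.2 (hEG.symm ▸ hE)
  exact ⟨G, hG, htr, _, (hEG.symm ▸ hu).mul_sqrt_of_withDensity hG htr g.2 hg0 hunit⟩

theorem IsQuasiBasis.exists_smul_quasiBasisIndex_normalized [Nontrivial B] [Algebra.IsCentral ℂ A]
    (hE : IsPositiveBimoduleMap A E) (hu : IsQuasiBasis E u) :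
    ∃ r : ℝ, 0 < r ∧ E (r • quasiBasisIndex u) = 1 := by
  have hnonneg := quasiBasisIndex_nonneg u
  obtain ⟨a, ha, hnorm⟩ := hE.exists_smul_normalized (hu.isFaithful hE)
    (sqrt_mem_relativeCommutant (hu.quasiBasisIndex_mem_relativeCommutant hE))
    ((CFC.isUnit_sqrt_iff _ hnonneg).2 (hu.isUnit_quasiBasisIndex hE)).ne_zero
  refine ⟨a * a, mul_self_pos.2 ha, ?_⟩
  rwa [star_smul, star_trivial, star_sqrt, smul_mul_smul_comm,
    CFC.sqrt_mul_sqrt_self _ hnonneg] at hnorm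

theorem IsQuasiBasis.exists_isConditionalExpectation_index_eq_smul_one [Nontrivial B]
    [Algebra.IsCentral ℂ A] (hE : IsPositiveBimoduleMap A E) (htr : IsRelativelyTracial A E)
    (hu : IsQuasiBasis E u) :
    ∃ F : B →ₗ[ℂ] B, IsConditionalExpectation A F ∧ IsRelativelyTracial A F ∧
      ∃ w : ι → B, IsQuasiBasis F w ∧ ∃ μ : ℂ, quasiBasisIndex w = μ • 1 := by
  obtain ⟨r, hr, hnorm⟩ := hu.exists_smul_quasiBasisIndex_normalized hE
  obtain ⟨h, hh⟩ : IsUnit (r • quasiBasisIndex u) :=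
    (isUnit_smul_iff (Units.mk0 r hr.ne') _).2 (hu.isUnit_quasiBasisIndex hE)
  have hcentral (b) : Commute (h : B) b :=
    hh ▸ (hu.commute_quasiBasisIndex hE b).smul_left r
  have hinv_central (b) : Commute (↑h⁻¹ : B) b := (hcentral b).units_inv_left
  have h0 : 0 ≤ (h : B) := hh ▸ smul_nonneg hr.le (quasiBasisIndex_nonneg u)
  have hinv0 : 0 ≤ (↑h⁻¹ : B) := CFC.inv_nonneg_of_nonneg h h0
  set F := withDensity E h
  have hF : IsPositiveBimoduleMap A F :=
    isPositiveBimoduleMap_withDensity hE htr (mem_relativeCommutant_iff.2 fun a _ => hcentral a) h0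
  have hFtr : IsRelativelyTracial A F := isRelativelyTracial_withDensity htr hcentral
  have hEF : withDensity F ↑h⁻¹ = E := by
    rw [withDensity_withDensity, h.mul_inv, withDensity_one]
  refine ⟨F, ⟨hF, ?_⟩, hFtr, _, (hEF.symm ▸ hu).mul_sqrt_of_withDensity hF hFtr
    (mem_relativeCommutant_iff.2 fun a _ => hinv_central a) hinv0 h⁻¹.isUnit, (r⁻¹ : ℝ), ?_⟩
  · rw [withDensity_apply, mul_one, hh, hnorm]
  · have hindex : quasiBasisIndex u = r⁻¹ • (h : B) := by rw [hh, inv_smul_smul₀ hr.ne']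
    rw [quasiBasisIndex_mul_sqrt hinv0 hinv_central, hindex, mul_smul_comm, h.inv_mul,
      Complex.coe_smul]

theorem exists_pseudominimal_conditional_expectation_general [Algebra.IsCentral ℂ A]
    (hE : IsConditionalExpectation A E) (hu : IsQuasiBasis E u) :
    ∃ F : B →ₗ[ℂ] B, IsConditionalExpectation A F ∧ IsRelativelyTracial A F ∧
      ∃ w : ι → B, IsQuasiBasis F w ∧ ∃ μ : ℂ, quasiBasisIndex w = μ • 1 := by
  rcases subsingleton_or_nontrivial B with _ | _
  · exact ⟨E, hE, fun _ _ _ => Subsingleton.elim _ _, u, hu, 0, Subsingleton.elim _ _⟩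
  · obtain ⟨G, hG, htr, w, hw⟩ := hu.exists_isRelativelyTracial hE
    exact hw.exists_isConditionalExpectation_index_eq_smul_one hG htr

end Pseudominimal

/-- If `1 ∈ A ⊆ B` is an inclusion of unital C*-algebras with `A` simple and there exists
a faithful conditional expectation `E : B → A` of index-finite type (i.e., admitting a
quasi-basis), then there exists a pseudominimal conditional expectation `F : B → A` of
index-finite type: `Index (F)` is a scalar multiple of the unit and `F (c * b) = F (b * c)`
for all `c ∈ A' ∩ B` and `b ∈ B`. -/
theorem exists_pseudominimal_conditional_expectation
    {B : Type*} [CStarAlgebra B] [PartialOrder B] [StarOrderedRing B]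
    (A : StarSubalgebra ℂ B) (hA : IsClosed (A : Set B))
    (hAsimple : ∀ I : Set B, I ⊆ (A : Set B) → IsClosed I → (0 : B) ∈ I →
      (∀ x ∈ I, ∀ y ∈ I, x + y ∈ I) → (∀ x ∈ I, -x ∈ I) →
      (∀ x ∈ I, ∀ a ∈ A, a * x ∈ I) → (∀ x ∈ I, ∀ a ∈ A, x * a ∈ I) →
      I = {0} ∨ I = (A : Set B))
    (E : B →ₗ[ℂ] B)
    (hrange : ∀ x : B, E x ∈ A)
    (hid : ∀ x ∈ A, E x = x)
    (hbimod : ∀ a ∈ A, ∀ c ∈ A, ∀ x : B, E (a * x * c) = a * E x * c)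
    (hpos : ∀ x : B, 0 ≤ x → 0 ≤ E x)
    (hfaithful : ∀ x : B, E (star x * x) = 0 → x = 0)
    (n : ℕ) (u : Fin n → B)
    (hqb₁ : ∀ b : B, b = ∑ j, u j * E (star (u j) * b))
    (hqb₂ : ∀ b : B, b = ∑ j, E (b * u j) * star (u j)) :
    ∃ F : B →ₗ[ℂ] B,
      (∀ x : B, F x ∈ A) ∧
      (∀ x ∈ A, F x = x) ∧
      (∀ a ∈ A, ∀ c ∈ A, ∀ x : B, F (a * x * c) = a * F x * c) ∧
      (∀ x : B, 0 ≤ x → 0 ≤ F x) ∧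
      ∃ (m : ℕ) (w : Fin m → B),
        (∀ b : B, b = ∑ j, w j * F (star (w j) * b)) ∧
        (∀ b : B, b = ∑ j, F (b * w j) * star (w j)) ∧
        (∃ μ : ℂ, ∑ j, w j * star (w j) = μ • (1 : B)) ∧
        (∀ c : B, (∀ a ∈ A, c * a = a * c) → ∀ b : B, F (c * b) = F (b * c)) := by
  have : Algebra.IsCentral ℂ A := IsTopologicallySimple.isCentral hAsimple hA
  have hE : IsConditionalExpectation A E :=
    { map_mem := hrange
      map_mul_left := fun a ha x => by simpa using hbimod a ha 1 (one_mem A) x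
      map_nonneg := hpos
      map_one := hid 1 (one_mem A) }
  have hu : IsQuasiBasis E u := fun b => (reconstruction_apply u b).trans (hqb₁ b).symm
  obtain ⟨F, hF, htr, w, hw, hindex⟩ :=
    exists_pseudominimal_conditional_expectation_general hE hu
  refine ⟨F, hF.map_mem, fun x hx => ?_, fun a ha c hc x => ?_, hF.map_nonneg, n, w,
    fun b => ?_, fun b => ?_, hindex, fun c hc => htr c (mem_relativeCommutant_iff.2 hc)⟩
  · simpa [hF.map_one] using hF.map_mul_left x hx 1
  · rw [hF.map_mul_right hc, hF.map_mul_left a ha]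
  · rw [← reconstruction_apply, hw b]
  · exact (hw.sum_map_mul_star hF.toIsPositiveBimoduleMap b).symm
end

section
/- Let 1 ∈ A ⊆ B be an inclusion of unital C*-algebras, and let E : B → A be a conditional expectation with quasi-basis u_1, …, u_n satisfying E(c b) = E(b c) for all c ∈ A' ∩ B and all b ∈ B. Let p ∈ A' ∩ B be a nonzero projection, and suppose E(p) = λ·1 for some real λ > 0. Then the map F : pBp → pAp defined by F(x) = λ^{-1} E(x) p is a conditional expectation from pBp onto pAp (where pAp = {p a p : a ∈ A} and pBp = {p b p : b ∈ B}), and the family (λ^{1/2} p u_j p)_{j=1}^n is a quasi-basis for F: x = Σ_{j=1}^n λ^{1/2} p u_j p · F(λ^{1/2} p u_j^* p · x) = Σ_{j=1}^n F(x · λ^{1/2} p u_j p) · λ^{1/2} p u_j^* p for all x ∈ pBp. -/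
/-!
Since `p` commutes with `A ∋ E x`, compressing by `p` is the same as multiplying by `p`: every
element of `pAp` is `a * p` with `a ∈ A`, so the bimodule property of `E` passes to `F`, and
`E p = λ` makes `F` fix `pAp`. For the quasi-basis, the trace-like property `E (p * b) = E (b * p)`
gives `E (p * v * p * x) = E (v * x)` for `x ∈ pBp`, hence each term of the new expansion of `x` is
the compression `p * (u * E (v * x)) * p` of a term of the old one, and the terms sum to
`p * x * p = x`.
-/

section Semigroup

variable {S α : Type*} [Semigroup S] {p x : S}

theorem compress_eq_mul_of_commute {a : S} (hp : IsIdempotentElem p) (ha : Commute p a) :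
    p * a * p = a * p := by
  rw [ha.eq, mul_assoc, hp.eq]

variable {f : S → α}

theorem map_compress_mul (hf : ∀ b, f (p * b) = f (b * p)) (hpx : p * x = x) (hxp : x * p = x)
    (b : S) : f (p * b * p * x) = f (b * x) := by
  rw [mul_assoc _ p, hpx, mul_assoc, hf, mul_assoc, hxp]

theorem map_mul_compress (hf : ∀ b, f (p * b) = f (b * p)) (hpx : p * x = x) (hxp : x * p = x)
    (b : S) : f (x * (p * b * p)) = f (x * b) := by
  rw [← mul_assoc, ← mul_assoc, hxp, ← hf, ← mul_assoc, hpx]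

end Semigroup

section Corner

variable {𝕜 B : Type*} [CommSemiring 𝕜] [Semiring B] [Algebra 𝕜 B]

/-- The compression `p M p` of a linear subspace `M` by an element `p`, in practice an idempotent.
Both corners `pBp` and `pAp` are of this form, with `M = ⊤` and `M = A`. -/
def corner (p : B) (M : Submodule 𝕜 B) : Submodule 𝕜 B :=
  M.map (LinearMap.mulLeftRight 𝕜 (p, p))

variable {M : Submodule 𝕜 B} {p x z : B}

theorem mem_corner : z ∈ corner p M ↔ ∃ b ∈ M, z = p * b * p := by
  simp [corner, eq_comm]

theorem mul_eq_of_mem_corner (hp : IsIdempotentElem p) (hx : x ∈ corner p M) :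
    p * x = x ∧ x * p = x := by
  obtain ⟨b, -, rfl⟩ := mem_corner.1 hx
  exact (Subsemigroup.mem_corner_iff hp).1 ⟨b, rfl⟩

theorem mem_corner_iff_of_commute (hp : IsIdempotentElem p) (hM : ∀ a ∈ M, Commute p a) :
    z ∈ corner p M ↔ ∃ a ∈ M, z = a * p :=
  mem_corner.trans <| exists_congr fun a ↦ and_congr_right fun ha ↦ by
    rw [compress_eq_mul_of_commute hp (hM a ha)]

end Corner

section Definitions

variable {𝕜 B ι : Type*} [CommSemiring 𝕜] [Semiring B] [Algebra 𝕜 B]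

/-- `F` restricts to a conditional expectation from the subspace `D` onto the subspace `C`. To treat
`A ⊆ B` and `pAp ⊆ pBp` alike, `F` is defined on the whole ambient algebra and its values outside
`D` are irrelevant. The inclusion `C ≤ D` is not recorded. -/
structure IsConditionalExpectation_s7 [PartialOrder B] (D C : Submodule 𝕜 B) (F : B →ₗ[𝕜] B) :
    Prop where
  map_mem : ∀ x ∈ D, F x ∈ C
  map_eq_self : ∀ y ∈ C, F y = y
  map_mul_mul : ∀ y ∈ C, ∀ y' ∈ C, ∀ x ∈ D, F (y * x * y') = y * F x * y'
  map_nonneg : ∀ x ∈ D, 0 ≤ x → 0 ≤ F x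

/-- The pairs `(u j, v j)` form a quasi-basis for the restriction of `F` to `D`. A single family `u`
is a quasi-basis when this holds for `v j = star (u j)`. -/
structure IsQuasiBasis_s7 [Fintype ι] (D : Submodule 𝕜 B) (F : B →ₗ[𝕜] B) (u v : ι → B) :
    Prop where
  eq_sum_left : ∀ x ∈ D, x = ∑ j, u j * F (v j * x)
  eq_sum_right : ∀ x ∈ D, x = ∑ j, F (x * u j) * v j

end Definitions

section CutDown

variable {𝕜 B : Type*} [Semifield 𝕜] [Semiring B] [Algebra 𝕜 B]

/-- The map `x ↦ c⁻¹ E(x) p`, the candidate conditional expectation from `pBp` onto `pAp` when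
`E p = c`. It is defined on all of `B`, although only its restriction to `pBp` is of interest. -/
def cutDown (E : B →ₗ[𝕜] B) (p : B) (c : 𝕜) : B →ₗ[𝕜] B :=
  c⁻¹ • LinearMap.mulRight 𝕜 p ∘ₗ E

theorem cutDown_apply (E : B →ₗ[𝕜] B) (p : B) (c : 𝕜) (x : B) :
    cutDown E p c x = c⁻¹ • (E x * p) := rfl

end CutDown

section ConditionalExpectation

variable {𝕜 B : Type*} [Semifield 𝕜] [Semiring B] [Algebra 𝕜 B] [PartialOrder B]
  {A : Subalgebra 𝕜 B} {E : B →ₗ[𝕜] B} {p x y y' : B} {c : 𝕜}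

namespace IsConditionalExpectation_s7

theorem map_mul_left {a : B} (hE : IsConditionalExpectation_s7 ⊤ A.toSubmodule E) (ha : a ∈ A)
    (x : B) : E (a * x) = a * E x := by
  simpa using hE.map_mul_mul a ha 1 A.one_mem x trivial

theorem cutDown_mem_corner (hE : IsConditionalExpectation_s7 ⊤ A.toSubmodule E)
    (hp : IsIdempotentElem p) (hpA : ∀ a ∈ A, Commute p a) (c : 𝕜) (x : B) :
    cutDown E p c x ∈ corner p A.toSubmodule :=
  (mem_corner_iff_of_commute hp hpA).2
    ⟨c⁻¹ • E x, A.smul_mem (hE.map_mem x trivial) _, (smul_mul_assoc _ _ _).symm⟩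

theorem cutDown_eq_self (hE : IsConditionalExpectation_s7 ⊤ A.toSubmodule E)
    (hp : IsIdempotentElem p) (hpA : ∀ a ∈ A, Commute p a) (hc : c ≠ 0) (hEp : E p = c • 1)
    (hy : y ∈ corner p A.toSubmodule) : cutDown E p c y = y := by
  obtain ⟨a, ha, rfl⟩ := (mem_corner_iff_of_commute hp hpA).1 hy
  rw [cutDown_apply, hE.map_mul_left ha, hEp, mul_smul_comm, mul_one, smul_mul_assoc,
    inv_smul_smul₀ hc]

theorem cutDown_mul_mul (hE : IsConditionalExpectation_s7 ⊤ A.toSubmodule E)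
    (hp : IsIdempotentElem p) (hpA : ∀ a ∈ A, Commute p a) (c : 𝕜)
    (hy : y ∈ corner p A.toSubmodule) (hy' : y' ∈ corner p A.toSubmodule)
    (hx : x ∈ corner p (⊤ : Submodule 𝕜 B)) :
    cutDown E p c (y * x * y') = y * cutDown E p c x * y' := by
  obtain ⟨a, ha, rfl⟩ := (mem_corner_iff_of_commute hp hpA).1 hy
  obtain ⟨d, hd, rfl⟩ := (mem_corner_iff_of_commute hp hpA).1 hy'
  obtain ⟨hpx, hxp⟩ := mul_eq_of_mem_corner hp hx
  have hxp_mul_d : x * (d * p) = x * d := by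
    rw [← (hpA d hd).eq, ← mul_assoc, hxp]
  have hEx : p * (E x * p) = E x * p := by
    rw [← mul_assoc, compress_eq_mul_of_commute hp (hpA _ (hE.map_mem x trivial))]
  have hpd : p * (d * p) = d * p := by
    rw [← mul_assoc, compress_eq_mul_of_commute hp (hpA d hd)]
  have harg : a * p * x * (d * p) = a * x * d := by
    rw [mul_assoc a, hpx, mul_assoc, hxp_mul_d, mul_assoc]
  have hval : a * p * (E x * p) * (d * p) = a * E x * d * p := by
    rw [mul_assoc a, hEx]
    simp only [mul_assoc, hpd]
  rw [cutDown_apply, cutDown_apply, harg, hE.map_mul_mul a ha d hd x trivial, mul_smul_comm,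
    smul_mul_assoc, hval]

variable [StarRing B] [StarOrderedRing B] [StarRing 𝕜] [StarModule 𝕜 B] {s : 𝕜}

theorem cutDown_nonneg (hE : IsConditionalExpectation_s7 ⊤ A.toSubmodule E)
    (hp : IsStarProjection p) (hpA : ∀ a ∈ A, Commute p a) (hs : star s * s = c) (hx : 0 ≤ x) :
    0 ≤ cutDown E p c x := by
  have hconj : star (s⁻¹ • p) * E x * (s⁻¹ • p) = cutDown E p c x := by
    rw [star_smul, hp.isSelfAdjoint.star_eq, smul_mul_assoc, smul_mul_assoc, mul_smul_comm,
      smul_smul, compress_eq_mul_of_commute hp.isIdempotentElem (hpA _ (hE.map_mem x trivial)),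
      star_inv₀, ← mul_inv, hs, cutDown_apply]
  exact hconj ▸ star_left_conjugate_nonneg (hE.map_nonneg x trivial hx) (s⁻¹ • p)

theorem cutDown (hE : IsConditionalExpectation_s7 ⊤ A.toSubmodule E) (hp : IsStarProjection p)
    (hpA : ∀ a ∈ A, Commute p a) (hc : c ≠ 0) (hs : star s * s = c) (hEp : E p = c • 1) :
    IsConditionalExpectation_s7 (corner p ⊤) (corner p A.toSubmodule) (cutDown E p c) where
  map_mem x _ := hE.cutDown_mem_corner hp.isIdempotentElem hpA c x
  map_eq_self _ := hE.cutDown_eq_self hp.isIdempotentElem hpA hc hEp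
  map_mul_mul _ hy _ hy' _ := hE.cutDown_mul_mul hp.isIdempotentElem hpA c hy hy'
  map_nonneg _ _ := hE.cutDown_nonneg hp hpA hs

end IsConditionalExpectation_s7

end ConditionalExpectation

section QuasiBasis

variable {𝕜 B ι : Type*} [Semifield 𝕜] [Semiring B] [Algebra 𝕜 B] {E : B →ₗ[𝕜] B} {p x : B}

theorem smul_compress_mul_cutDown {c s t : 𝕜} (hp : IsIdempotentElem p)
    (hcomm : ∀ b, Commute p (E b)) (hpE : ∀ b, E (p * b) = E (b * p)) (hc : c ≠ 0)
    (hts : t * s = c) (hpx : p * x = x) (hxp : x * p = x) (u v : B) :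
    (s • (p * u * p)) * cutDown E p c ((t • (p * v * p)) * x) = p * (u * E (v * x)) * p := by
  have hcompress : p * u * p * (E (v * x) * p) = p * (u * E (v * x)) * p := by
    rw [mul_assoc (p * u), ← mul_assoc p (E _), compress_eq_mul_of_commute hp (hcomm _)]
    simp only [mul_assoc]
  rw [smul_mul_assoc t, map_smul, cutDown_apply, map_compress_mul hpE hpx hxp, smul_mul_assoc,
    mul_smul_comm, mul_smul_comm, smul_smul, smul_smul, mul_comm s, hts, mul_inv_cancel₀ hc,
    one_smul, hcompress]

theorem cutDown_mul_smul_compress {c s t : 𝕜} (hp : IsIdempotentElem p)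
    (hcomm : ∀ b, Commute p (E b)) (hpE : ∀ b, E (p * b) = E (b * p)) (hc : c ≠ 0)
    (hts : t * s = c) (hpx : p * x = x) (hxp : x * p = x) (u v : B) :
    cutDown E p c (x * (s • (p * u * p))) * (t • (p * v * p)) = p * (E (x * u) * v) * p := by
  have hcompress : E (x * u) * p * (p * v * p) = p * (E (x * u) * v) * p := by
    rw [← (hcomm _).eq, mul_assoc p v, mul_assoc p (E _), ← mul_assoc (E _) p, ← (hcomm _).eq]
    simp only [← mul_assoc, hp.eq]
  rw [mul_smul_comm s, map_smul, cutDown_apply, map_mul_compress hpE hpx hxp, mul_smul_comm,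
    smul_mul_assoc, smul_mul_assoc, smul_smul, smul_smul, hts, mul_inv_cancel₀ hc, one_smul,
    hcompress]

theorem IsQuasiBasis_s7.cutDown [Fintype ι] {u v : ι → B} {c s t : 𝕜} (huv : IsQuasiBasis_s7 ⊤ E u v)
    (hp : IsIdempotentElem p) (hcomm : ∀ b, Commute p (E b))
    (hpE : ∀ b, E (p * b) = E (b * p)) (hc : c ≠ 0) (hts : t * s = c) :
    IsQuasiBasis_s7 (corner p ⊤) (cutDown E p c) (fun j ↦ s • (p * u j * p))
      (fun j ↦ t • (p * v j * p)) where
  eq_sum_left x hx := by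
    obtain ⟨hpx, hxp⟩ := mul_eq_of_mem_corner hp hx
    simp only [smul_compress_mul_cutDown hp hcomm hpE hc hts hpx hxp]
    rw [← Finset.sum_mul, ← Finset.mul_sum, ← huv.eq_sum_left x trivial, hpx, hxp]
  eq_sum_right x hx := by
    obtain ⟨hpx, hxp⟩ := mul_eq_of_mem_corner hp hx
    simp only [cutDown_mul_smul_compress hp hcomm hpE hc hts hpx hxp]
    rw [← Finset.sum_mul, ← Finset.mul_sum, ← huv.eq_sum_right x trivial, hpx, hxp]

end QuasiBasis

theorem cutdown_conditional_expectation_formula_general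
    {𝕜 B ι : Type*} [Semifield 𝕜] [StarRing 𝕜] [Semiring B] [StarRing B] [PartialOrder B]
    [StarOrderedRing B] [Algebra 𝕜 B] [StarModule 𝕜 B] [Fintype ι]
    {A : Subalgebra 𝕜 B} {E : B →ₗ[𝕜] B} {u v : ι → B} {p : B} {c s : 𝕜}
    (hE : IsConditionalExpectation_s7 ⊤ A.toSubmodule E) (huv : IsQuasiBasis_s7 ⊤ E u v)
    (hp : IsStarProjection p) (hpA : ∀ a ∈ A, Commute p a) (hpE : ∀ b, E (p * b) = E (b * p))
    (hc : c ≠ 0) (hs : star s * s = c) (hEp : E p = c • 1) :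
    IsConditionalExpectation_s7 (corner p ⊤) (corner p A.toSubmodule) (cutDown E p c) ∧
      IsQuasiBasis_s7 (corner p ⊤) (cutDown E p c) (fun j ↦ s • (p * u j * p))
        (fun j ↦ star s • (p * v j * p)) :=
  ⟨hE.cutDown hp hpA hc hs hEp, huv.cutDown hp.isIdempotentElem
    (fun b ↦ hpA _ (hE.map_mem b trivial)) hpE hc hs⟩

/-- Let `1 ∈ A ⊆ B` be an inclusion of unital C*-algebras, `E : B → A` a conditional
expectation with quasi-basis `u₁, …, uₙ` satisfying `E (c b) = E (b c)` for `c ∈ A' ∩ B`,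
and let `p ∈ A' ∩ B` be a nonzero projection with `E (p) = λ • 1`, `λ > 0`.  Then
`F (x) = λ⁻¹ E (x) p` is a conditional expectation from `p B p` onto `p A p`, and
`(√λ p uⱼ p)ⱼ` is a quasi-basis for `F`. -/
theorem cutdown_conditional_expectation_formula
    {B : Type*} [CStarAlgebra B] [PartialOrder B] [StarOrderedRing B]
    (A : StarSubalgebra ℂ B) (hA : IsClosed (A : Set B))
    (E : B →ₗ[ℂ] B)
    (hrange : ∀ x : B, E x ∈ A)
    (hid : ∀ x ∈ A, E x = x)
    (hbimod : ∀ a ∈ A, ∀ c ∈ A, ∀ x : B, E (a * x * c) = a * E x * c)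
    (hpos : ∀ x : B, 0 ≤ x → 0 ≤ E x)
    (n : ℕ) (u : Fin n → B)
    (hqb₁ : ∀ b : B, b = ∑ j, u j * E (star (u j) * b))
    (hqb₂ : ∀ b : B, b = ∑ j, E (b * u j) * star (u j))
    (hEcomm : ∀ c : B, (∀ a ∈ A, c * a = a * c) → ∀ b : B, E (c * b) = E (b * c))
    (p : B) (hpproj : star p = p ∧ p * p = p) (hp0 : p ≠ 0)
    (hpcomm : ∀ a ∈ A, p * a = a * p)
    (lam : ℝ) (hlam : 0 < lam) (hEp : E p = (lam : ℂ) • (1 : B))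
    (F : B → B) (hF : ∀ x : B, F x = ((lam⁻¹ : ℝ) : ℂ) • (E x * p)) :
    (∀ x ∈ {z : B | ∃ b : B, z = p * b * p},
      F x ∈ {z : B | ∃ a ∈ A, z = p * a * p}) ∧
    (∀ y ∈ {z : B | ∃ a ∈ A, z = p * a * p}, F y = y) ∧
    (∀ y ∈ {z : B | ∃ a ∈ A, z = p * a * p},
      ∀ y' ∈ {z : B | ∃ a ∈ A, z = p * a * p},
      ∀ x ∈ {z : B | ∃ b : B, z = p * b * p}, F (y * x * y') = y * F x * y') ∧
    (∀ x ∈ {z : B | ∃ b : B, z = p * b * p}, 0 ≤ x → 0 ≤ F x) ∧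
    (∀ x ∈ {z : B | ∃ b : B, z = p * b * p},
      x = ∑ j, ((Real.sqrt lam : ℂ) • (p * u j * p)) *
        F (((Real.sqrt lam : ℂ) • (p * star (u j) * p)) * x)) ∧
    (∀ x ∈ {z : B | ∃ b : B, z = p * b * p},
      x = ∑ j, F (x * ((Real.sqrt lam : ℂ) • (p * u j * p))) *
        ((Real.sqrt lam : ℂ) • (p * star (u j) * p))) := by
  have hE : IsConditionalExpectation_s7 ⊤ A.toSubalgebra.toSubmodule E :=
    ⟨fun x _ ↦ hrange x, hid, fun a ha c hc x _ ↦ hbimod a ha c hc x, fun x _ ↦ hpos x⟩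
  have hu : IsQuasiBasis_s7 ⊤ E u (fun j ↦ star (u j)) := ⟨fun b _ ↦ hqb₁ b, fun b _ ↦ hqb₂ b⟩
  have hsqrt : star (Real.sqrt lam : ℂ) * (Real.sqrt lam : ℂ) = lam := by
    rw [Complex.star_def, Complex.conj_ofReal]
    exact_mod_cast Real.mul_self_sqrt hlam.le
  obtain rfl : F = cutDown E p (lam : ℂ) := funext fun x ↦ by
    rw [hF, cutDown_apply, Complex.ofReal_inv]
  obtain ⟨hF_exp, hF_basis⟩ := cutdown_conditional_expectation_formula_general hE hu
    ⟨hpproj.2, hpproj.1⟩ hpcomm (hEcomm p hpcomm) (by exact_mod_cast hlam.ne') hsqrt hEp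
  have hpBp (x : B) : x ∈ {z : B | ∃ b : B, z = p * b * p} ↔
      x ∈ corner p (⊤ : Submodule ℂ B) := by simp [mem_corner]
  have hpAp (x : B) : x ∈ {z : B | ∃ a ∈ A, z = p * a * p} ↔
      x ∈ corner p A.toSubalgebra.toSubmodule := by simp [mem_corner]
  simp only [hpBp, hpAp]
  rw [Complex.star_def, Complex.conj_ofReal] at hF_basis
  exact ⟨hF_exp.map_mem, hF_exp.map_eq_self, hF_exp.map_mul_mul, hF_exp.map_nonneg,
    hF_basis.eq_sum_left, hF_basis.eq_sum_right⟩
end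

section
/- Let C be a unital C*-algebra, let z be a positive invertible element of the center of C, and let e_1, …, e_N be projections in C satisfying the Jones relations e_k e_{k+1} e_k = z^{-1} e_k, e_{k+1} e_k e_{k+1} = z^{-1} e_{k+1}, and e_k e_l = e_l e_k for |k − l| > 1 (all indices in {1, …, N}). Then for every m ≥ 1 and j ≥ 0 with 2m + j − 1 ≤ N: (e_{j+1} e_{j+2} ⋯ e_{m+j−1}) g_m^{(j)} (e_{m+j−1} e_{m+j−2} ⋯ e_{j+1}) = z^{−2(m−1)} g_{m−1}^{(j+2)} e_{j+1}, where for m = 1 the outer products are empty (equal to 1) and the identity reads g_1^{(j)} = e_{j+1}. -/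
/-- The descending product `e a * e (a - 1) * ⋯ * e b` (equal to `1` when `b > a`). -/
def dProd {C : Type*} [Monoid C] (e : ℕ → C) (a b : ℕ) : C :=
  ((List.range (a + 1 - b)).map fun i => e (a - i)).prod

/-- The ascending product `e a * e (a + 1) * ⋯ * e b` (equal to `1` when `a > b`). -/
def aProd {C : Type*} [Monoid C] (e : ℕ → C) (a b : ℕ) : C :=
  ((List.range (b + 1 - a)).map fun i => e (a + i)).prod

/-- `gElt e n j` is the element
`g_n^{(j)} = (e_{n+j} e_{n+j-1} ⋯ e_{j+1}) (e_{n+j+1} e_{n+j} ⋯ e_{j+2}) ⋯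
(e_{2n+j-1} e_{2n+j-2} ⋯ e_{n+j})`, a product of `n` blocks whose `i`-th block
(`1 ≤ i ≤ n`) is the descending product `e_{n+j+i-1} e_{n+j+i-2} ⋯ e_{j+i}`;
and `g_0^{(j)} = 1`. -/
def gElt {C : Type*} [Monoid C] (e : ℕ → C) (n j : ℕ) : C :=
  ((List.range n).map fun i => dProd e (n + j + i) (j + i + 1)).prod

/-!
The first block of `g_m^{(j)}` collapses against the left factor,
`(e_{j+1} ⋯ e_{m+j-1}) (e_{m+j} ⋯ e_{j+1}) = t^{m-1} e_{j+1}`, where `t = z⁻¹`. The surviving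
`e_{j+1}` then travels to the right through the other `m - 1` blocks: each of them is a block of
`g_{m-1}^{(j+2)}` followed by one generator, and the ascending product accumulated so far commutes
with that block and absorbs the generator. What emerges on the right is `e_{j+1} ⋯ e_{m+j}`, which
collapses against the right factor to a second `t^{m-1} e_{j+1}`.
-/

section Products

variable {M : Type*} [Monoid M] {e : ℕ → M} {x : M} {a b n j : ℕ}

theorem aProd_eq_one_of_lt (h : b < a) : aProd e a b = 1 := by
  simp [aProd, Nat.sub_eq_zero_of_le h]

theorem dProd_eq_one_of_lt (h : a < b) : dProd e a b = 1 := by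
  simp [dProd, Nat.sub_eq_zero_of_le h]

theorem aProd_succ_right (h : a ≤ b + 1) : aProd e a (b + 1) = aProd e a b * e (b + 1) := by
  rw [aProd, Nat.sub_add_comm h, List.prod_range_succ, Nat.add_sub_cancel' h, aProd]

theorem dProd_succ_left (h : b ≤ a + 1) : dProd e (a + 1) b = e (a + 1) * dProd e a b := by
  rw [dProd, Nat.sub_add_comm h, List.prod_range_succ']
  simp only [Nat.sub_zero, Nat.succ_eq_add_one, Nat.add_sub_add_right, dProd]

theorem dProd_eq_dProd_succ_mul (h : b ≤ a) : dProd e a b = dProd e a (b + 1) * e b := by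
  rw [dProd, Nat.sub_add_comm h, List.prod_range_succ, Nat.sub_sub_self h, dProd,
    Nat.add_sub_add_right]

theorem commute_aProd_left (h : ∀ k, a ≤ k → k ≤ b → Commute (e k) x) :
    Commute (aProd e a b) x := by
  refine Commute.list_prod_left _ _ fun y hy => ?_
  obtain ⟨i, hi, rfl⟩ := List.mem_map.mp hy
  have hi := List.mem_range.mp hi
  exact h _ (by omega) (by omega)

theorem commute_dProd_left (h : ∀ k, b ≤ k → k ≤ a → Commute (e k) x) :
    Commute (dProd e a b) x := by
  refine Commute.list_prod_left _ _ fun y hy => ?_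
  obtain ⟨i, hi, rfl⟩ := List.mem_map.mp hy
  have hi := List.mem_range.mp hi
  exact h _ (by omega) (by omega)

theorem commute_gElt_left (h : ∀ k, j < k → k < 2 * n + j → Commute (e k) x) :
    Commute (gElt e n j) x := by
  refine Commute.list_prod_left _ _ fun y hy => ?_
  obtain ⟨i, hi, rfl⟩ := List.mem_map.mp hy
  have hi := List.mem_range.mp hi
  exact commute_dProd_left fun k hk hk' => h k (by omega) (by omega)

theorem gElt_succ (e : ℕ → M) (n j : ℕ) :
    gElt e (n + 1) j = dProd e (n + j + 1) (j + 1) *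
      ((List.range n).map fun i =>
        dProd e (n + (j + 2) + i) (j + 2 + i + 1) * e (j + 1 + i + 1)).prod := by
  rw [gElt, List.prod_range_succ', add_zero, add_zero, add_right_comm n 1 j]
  congr 2
  refine List.map_congr_left fun i _ => ?_
  rw [dProd_eq_dProd_succ_mul (by omega)]
  congr 2 <;> omega

theorem mul_prod_map_mul_succ (X : ℕ → M)
    (hX : ∀ i < n, ∀ k, a ≤ k → k ≤ a + i → Commute (e k) (X i)) :
    e a * ((List.range n).map fun i => X i * e (a + i + 1)).prod
      = ((List.range n).map X).prod * aProd e a (a + n) := by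
  induction n with
  | zero => simp [aProd]
  | succ n ih =>
    have hcomm : Commute (aProd e a (a + n)) (X n) := commute_aProd_left (hX n n.lt_succ_self)
    rw [List.prod_range_succ, List.prod_range_succ, ← mul_assoc,
      ih fun i hi => hX i (hi.trans n.lt_succ_self), ← add_assoc, aProd_succ_right (by omega)]
    simp only [mul_assoc, hcomm.left_comm]

end Products

section Collapse

variable {M : Type*} [Monoid M] {e : ℕ → M} {t : M} {a b n : ℕ}

theorem aProd_succ_mul_dProd (h : a ≤ b + 1) :
    aProd e a (b + 1) * dProd e b a = aProd e a b * dProd e (b + 1) a := by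
  rw [aProd_succ_right h, dProd_succ_left h, mul_assoc]

-- The indices start at `a + 1` so that `a + n` is the last index even when `n = 0`.
theorem aProd_mul_dProd_succ
    (ht : ∀ k, a < k → k < a + n → Commute (e k) t)
    (hrel : ∀ k, a < k → k ≤ a + n → e k * e (k + 1) * e k = t * e k) :
    aProd e (a + 1) (a + n) * dProd e (a + n + 1) (a + 1) = t ^ n * e (a + 1) := by
  induction n with
  | zero => simp [aProd_eq_one_of_lt, dProd_succ_left, dProd_eq_one_of_lt]
  | succ n ih =>
    have hcomm : Commute (aProd e (a + 1) (a + n)) t :=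
      commute_aProd_left fun k hk hk' => ht k hk (by omega)
    calc aProd e (a + 1) (a + n + 1) * dProd e (a + n + 1 + 1) (a + 1)
        = aProd e (a + 1) (a + n) * (e (a + n + 1) * e (a + n + 1 + 1) * e (a + n + 1)) *
            dProd e (a + n) (a + 1) := by
          rw [aProd_succ_right (by omega), dProd_succ_left (by omega),
            dProd_succ_left (by omega)]
          simp only [mul_assoc]
      _ = t * (aProd e (a + 1) (a + n) * dProd e (a + n + 1) (a + 1)) := by
          rw [hrel _ (by omega) (by omega), dProd_succ_left (by omega)]
          simp only [mul_assoc, hcomm.left_comm]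
      _ = t ^ (n + 1) * e (a + 1) := by
          rw [ih (fun k hk hk' => ht k hk (by omega)) fun k hk hk' => hrel k hk (by omega),
            pow_succ', mul_assoc]

end Collapse

theorem jones_g_compression_general {M : Type*} [Monoid M] (N : ℕ) (t : M) (e : ℕ → M)
    (ht : ∀ k, 1 ≤ k → k ≤ N → Commute (e k) t)
    (hrel : ∀ k, 1 ≤ k → k + 1 ≤ N → e k * e (k + 1) * e k = t * e k)
    (hfar : ∀ k l, 1 ≤ k → k + 1 < l → l ≤ N → Commute (e k) (e l))
    (n j : ℕ) (hN : 2 * n + j + 1 ≤ N) :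
    aProd e (j + 1) (j + n) * gElt e (n + 1) j * dProd e (j + n) (j + 1)
      = t ^ (2 * n) * gElt e n (j + 2) * e (j + 1) := by
  set P := ((List.range n).map fun i =>
    dProd e (n + (j + 2) + i) (j + 2 + i + 1) * e (j + 1 + i + 1)).prod
  have hcollapse : aProd e (j + 1) (j + n) * dProd e (j + n + 1) (j + 1) = t ^ n * e (j + 1) :=
    aProd_mul_dProd_succ (fun k hk hk' => ht k (by omega) (by omega))
      fun k hk hk' => hrel k (by omega) (by omega)
  have hpush : e (j + 1) * P = gElt e n (j + 2) * aProd e (j + 1) (j + n + 1) := by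
    rw [add_right_comm j n 1]
    exact mul_prod_map_mul_succ _ fun i hi k hk hk' => (commute_dProd_left fun l hl hl' =>
      (hfar k l (by omega) (by omega) (by omega)).symm).symm
  have hcomm : Commute (gElt e n (j + 2)) (t ^ n) :=
    commute_gElt_left fun k hk hk' => (ht k (by omega) (by omega)).pow_right n
  calc aProd e (j + 1) (j + n) * gElt e (n + 1) j * dProd e (j + n) (j + 1)
      = aProd e (j + 1) (j + n) * dProd e (j + n + 1) (j + 1) * P * dProd e (j + n) (j + 1) := by
        rw [gElt_succ, add_comm n j, ← mul_assoc]
    _ = t ^ n * (e (j + 1) * P) * dProd e (j + n) (j + 1) := by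
        rw [hcollapse, mul_assoc (t ^ n)]
    _ = t ^ n * gElt e n (j + 2) * (aProd e (j + 1) (j + n + 1) * dProd e (j + n) (j + 1)) := by
        rw [hpush]; simp only [mul_assoc]
    _ = t ^ n * gElt e n (j + 2) * (t ^ n * e (j + 1)) := by
        rw [aProd_succ_mul_dProd (by omega), hcollapse]
    _ = t ^ (2 * n) * gElt e n (j + 2) * e (j + 1) := by
        simp only [two_mul, pow_add, mul_assoc, hcomm.left_comm]

/-- In a unital C*-algebra with a positive invertible central element `z` and projections
`e₁, …, e_N` satisfying the Jones relations, for `m ≥ 1` and `2m + j - 1 ≤ N` one has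
`(e_{j+1} ⋯ e_{m+j-1}) g_m^{(j)} (e_{m+j-1} ⋯ e_{j+1})
  = z^{-2(m-1)} g_{m-1}^{(j+2)} e_{j+1}`. -/
theorem jones_g_compression
    {C : Type*} [CStarAlgebra C] [PartialOrder C] [StarOrderedRing C]
    (N : ℕ) (z : C) [Invertible z] (hzpos : 0 ≤ z) (hzc : ∀ c : C, z * c = c * z)
    (e : ℕ → C)
    (hproj : ∀ k, 1 ≤ k → k ≤ N → star (e k) = e k ∧ e k * e k = e k)
    (h1 : ∀ k, 1 ≤ k → k + 1 ≤ N → e k * e (k + 1) * e k = ⅟z * e k)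
    (h2 : ∀ k, 1 ≤ k → k + 1 ≤ N → e (k + 1) * e k * e (k + 1) = ⅟z * e (k + 1))
    (h3 : ∀ k l, 1 ≤ k → k ≤ N → 1 ≤ l → l ≤ N → (k + 1 < l ∨ l + 1 < k) →
      e k * e l = e l * e k)
    (m j : ℕ) (hm : 1 ≤ m) (hrange : 2 * m + j - 1 ≤ N) :
    aProd e (j + 1) (m + j - 1) * gElt e m j * dProd e (m + j - 1) (j + 1)
      = (⅟z) ^ (2 * (m - 1)) * gElt e (m - 1) (j + 2) * e (j + 1) := by
  obtain ⟨n, rfl⟩ := Nat.exists_eq_add_of_le' hm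
  have hsub : n + 1 + j - 1 = j + n := by omega
  rw [hsub]
  exact jones_g_compression_general N (⅟z) e
    (fun k _ _ => (show Commute (e k) z from (hzc (e k)).symm).invOf_right) h1
    (fun k l hk hkl hl => h3 k l hk (by omega) (by omega) hl (.inl hkl)) n j (by omega)
end

section
/- Let C be a unital C*-algebra, let B_0 ⊆ B_1 ⊆ ⋯ ⊆ B_n be unital C*-subalgebras of C with common unit, and for 1 ≤ k ≤ n let E_k : B_k → B_{k−1} be a conditional expectation. Let z be a positive invertible element of B_0 lying in the center of C, and let e_1, …, e_{2n−1} be projections in C satisfying: e_k e_{k+1} e_k = z^{−1} e_k and e_{k+1} e_k e_{k+1} = z^{−1} e_{k+1} for 1 ≤ k ≤ 2n−2; e_k e_l = e_l e_k for |k − l| > 1; e_l x = x e_l for all x ∈ B_k whenever l > k; and e_k x e_k = E_k(x) e_k for all x ∈ B_k and 1 ≤ k ≤ n. Set f_n = z^{n(n−1)/2} (e_n e_{n−1} ⋯ e_1)(e_{n+1} e_n ⋯ e_2) ⋯ (e_{2n−1} e_{2n−2} ⋯ e_n). Then for every x ∈ B_n, f_n x f_n = (E_1 ∘ E_2 ∘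 ⋯ ∘ E_n)(x) f_n. -/
/-- `iterE E m x = E 1 (E 2 (⋯ (E m x)))`, the composition `E_1 ∘ E_2 ∘ ⋯ ∘ E_m`
applied to `x`. -/
def iterE {C : Type*} [AddCommGroup C] [Module ℂ C] (E : ℕ → (C →ₗ[ℂ] C)) :
    ℕ → C → C
  | 0, x => x
  | (m + 1), x => iterE E m (E (m + 1) x)

/-!
Moving the leading letters of the blocks to the left gives, for `A = e_{n+1} ⋯ e_{2n+1}` and
`D = e_{2n+1} ⋯ e_{n+1}`, two factorizations
`f_{n+1} = zⁿ (e_{n+1} ⋯ e_{2n}) f_n D = A f_n (e_{2n} ⋯ e_{n+1}) zⁿ`.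
In `f_{n+1} x f_{n+1}` the factors meeting at `x` form `D x A`. Since `D` ends and `A` begins with
`e_{n+1}`, which compresses `x` to `y = E_{n+1} x`, and since `y` commutes with `A`, this is
`D A y`, and the Jones relations collapse `zⁿ D A` to `e_{2n+1}`. What remains is `f_n y f_n`,
to which induction applies.
-/

section JonesRelations

variable {M : Type*} [Monoid M] {e : ℕ → M}

section Products

lemma dProd_self (e : ℕ → M) (a : ℕ) : dProd e a a = e a := by
  simp [dProd]

lemma aProd_self (e : ℕ → M) (a : ℕ) : aProd e a a = e a := by
  simp [aProd]

lemma aProd_succ_self (e : ℕ → M) (b : ℕ) : aProd e (b + 1) b = 1 := by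
  simp [aProd]

lemma dProd_succ {a b : ℕ} (e : ℕ → M) (h : b ≤ a + 1) :
    dProd e (a + 1) b = e (a + 1) * dProd e a b := by
  simp [dProd, Nat.sub_add_comm h, List.range_succ_eq_map, Function.comp_def]

lemma aProd_succ {a b : ℕ} (e : ℕ → M) (h : a ≤ b + 1) :
    aProd e a (b + 1) = aProd e a b * e (b + 1) := by
  simp [aProd, Nat.sub_add_comm h, List.range_succ, Nat.add_sub_cancel' h]

lemma commute_dProd {a b : ℕ} {y : M} (h : ∀ l, b ≤ l → l ≤ a → Commute y (e l)) :
    Commute y (dProd e a b) := by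
  refine Commute.list_prod_right _ _ fun w hw => ?_
  obtain ⟨i, hi, rfl⟩ := List.mem_map.1 hw
  have := List.mem_range.1 hi
  exact h _ (by lia) (by lia)

lemma commute_aProd {a b : ℕ} {y : M} (h : ∀ l, a ≤ l → l ≤ b → Commute y (e l)) :
    Commute y (aProd e a b) := by
  refine Commute.list_prod_right _ _ fun w hw => ?_
  obtain ⟨i, hi, rfl⟩ := List.mem_map.1 hw
  have := List.mem_range.1 hi
  exact h _ (by lia) (by lia)

lemma dProd_mul_of_isIdempotentElem {a b : ℕ} (hba : b ≤ a) (hb : IsIdempotentElem (e b)) :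
    dProd e a b * e b = dProd e a b := by
  induction a, hba using Nat.le_induction with
  | base => rw [dProd_self, hb.eq]
  | succ a hba ih => rw [dProd_succ e (by lia), mul_assoc, ih]

lemma mul_aProd_of_isIdempotentElem {a b : ℕ} (hab : a ≤ b) (ha : IsIdempotentElem (e a)) :
    e a * aProd e a b = aProd e a b := by
  induction b, hab using Nat.le_induction with
  | base => rw [aProd_self, ha.eq]
  | succ b hab ih => rw [aProd_succ e (by lia), ← mul_assoc, ih]

end Products

section Blocks

/-- The product of `m` descending blocks of length `r`,
`(e_{r+j} ⋯ e_{j+1}) (e_{r+j+1} ⋯ e_{j+2}) ⋯ (e_{r+j+m-1} ⋯ e_{j+m})`.  The number of blocks is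
decoupled from their length, unlike in `gElt`, so that one can induct on it. -/
def blockProd (e : ℕ → M) (r j m : ℕ) : M :=
  ((List.range m).map fun i => dProd e (r + j + i) (j + i + 1)).prod

lemma gElt_eq_blockProd (e : ℕ → M) (n j : ℕ) : gElt e n j = blockProd e n j n := rfl

lemma blockProd_zero (e : ℕ → M) (r j : ℕ) : blockProd e r j 0 = 1 := rfl

lemma blockProd_succ (e : ℕ → M) (r j m : ℕ) :
    blockProd e r j (m + 1) = blockProd e r j m * dProd e (r + j + m) (j + m + 1) := by
  simp [blockProd, List.range_succ]

lemma commute_blockProd {r j m : ℕ} {y : M}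
    (h : ∀ l, j < l → l < r + j + m → Commute y (e l)) : Commute y (blockProd e r j m) := by
  refine Commute.list_prod_right _ _ fun w hw => ?_
  obtain ⟨i, hi, rfl⟩ := List.mem_map.1 hw
  have := List.mem_range.1 hi
  exact commute_dProd fun l _ _ => h l (by lia) (by lia)

lemma blockProd_succ_length {r j m : ℕ}
    (h : ∀ k l, j < k → k + 1 < l → l ≤ r + j + m → Commute (e k) (e l)) :
    blockProd e (r + 1) j m = aProd e (r + j + 1) (r + j + m) * blockProd e r j m := by
  induction m with
  | zero => simp only [blockProd_zero, add_zero, aProd_succ_self, mul_one]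
  | succ m ih =>
    have hcomm : Commute (e (r + j + m + 1)) (blockProd e r j m) :=
      commute_blockProd fun l _ _ => (h l _ (by lia) (by lia) (by lia)).symm
    calc blockProd e (r + 1) j (m + 1)
        = aProd e (r + j + 1) (r + j + m) * blockProd e r j m *
            dProd e (r + j + m + 1) (j + m + 1) := by
          rw [blockProd_succ, ih fun k l _ _ _ => h k l (by lia) (by lia) (by lia),
            show r + 1 + j + m = r + j + m + 1 by lia]
      _ = aProd e (r + j + 1) (r + j + m) * (blockProd e r j m * e (r + j + m + 1)) *
            dProd e (r + j + m) (j + m + 1) := by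
          simp only [dProd_succ e (show j + m + 1 ≤ r + j + m + 1 by lia), mul_assoc]
      _ = aProd e (r + j + 1) (r + j + (m + 1)) * blockProd e r j (m + 1) := by
          simp only [← hcomm.eq, blockProd_succ, ← add_assoc, mul_assoc,
            aProd_succ e (show r + j + 1 ≤ r + j + m + 1 by lia)]

lemma gElt_succ_s11 {n j : ℕ}
    (h : ∀ k l, j < k → k + 1 < l → l ≤ 2 * n + j + 1 → Commute (e k) (e l)) :
    gElt e (n + 1) j =
      aProd e (n + j + 1) (2 * n + j + 1) * gElt e n j * dProd e (2 * n + j) (n + j + 1) := by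
  rw [gElt_eq_blockProd, blockProd_succ_length fun k l hk hkl hl => h k l hk hkl (by lia),
    blockProd_succ, ← gElt_eq_blockProd, ← mul_assoc]
  rw [show n + j + (n + 1) = 2 * n + j + 1 by lia, show n + j + n = 2 * n + j by lia,
    show j + n + 1 = n + j + 1 by lia]

lemma commute_gElt {n j : ℕ} {y : M} (h : ∀ l, j < l → l < 2 * n + j → Commute y (e l)) :
    Commute y (gElt e n j) :=
  commute_blockProd fun l hl _ => h l hl (by lia)

lemma gElt_succ' {n j : ℕ}
    (h : ∀ k l, j < k → k + 1 < l → l ≤ 2 * n + j + 1 → Commute (e k) (e l)) :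
    gElt e (n + 1) j =
      aProd e (n + j + 1) (2 * n + j) * gElt e n j * dProd e (2 * n + j + 1) (n + j + 1) := by
  have hcomm : Commute (e (2 * n + j + 1)) (gElt e n j) :=
    commute_gElt fun l hl _ => (h l _ hl (by lia) le_rfl).symm
  rw [gElt_succ_s11 h, aProd_succ e (by lia), dProd_succ e (by lia), mul_assoc (aProd _ _ _),
    hcomm.eq]
  simp only [mul_assoc]

end Blocks

/-- Idempotents `e_1, …, e_N` satisfying the Jones (Temperley–Lieb) relations with parameter `z`.
The relation `e_{k+1} e_k e_{k+1} = z⁻¹ e_{k+1}` is multiplied through by `z`, so that it makes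
sense in a monoid; of the two mirror-image Jones relations only this one is imposed. -/
structure IsJonesSequence (z : M) (e : ℕ → M) (N : ℕ) : Prop where
  isIdempotentElem : ∀ k, 1 ≤ k → k ≤ N → IsIdempotentElem (e k)
  commute_parameter : ∀ k, 1 ≤ k → k ≤ N → Commute z (e k)
  parameter_mul : ∀ k, 1 ≤ k → k + 1 ≤ N → z * (e (k + 1) * e k * e (k + 1)) = e (k + 1)
  commute : ∀ k l, 1 ≤ k → k + 1 < l → l ≤ N → Commute (e k) (e l)

/-- The element `f_n = z^{n(n-1)/2} (e_n ⋯ e_1) (e_{n+1} ⋯ e_2) ⋯ (e_{2n-1} ⋯ e_n)`, which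
implements the composition of the first `n` conditional expectations of the tower. -/
def jonesElt (z : M) (e : ℕ → M) (n : ℕ) : M :=
  z ^ (n * (n - 1) / 2) * gElt e n 0

namespace IsJonesSequence

variable {z : M} {N n m a b : ℕ}

lemma mono (he : IsJonesSequence z e N) (hmN : m ≤ N) : IsJonesSequence z e m where
  isIdempotentElem k hk hkm := he.isIdempotentElem k hk (hkm.trans hmN)
  commute_parameter k hk hkm := he.commute_parameter k hk (hkm.trans hmN)
  parameter_mul k hk hkm := he.parameter_mul k hk (hkm.trans hmN)
  commute k l hk hkl hlm := he.commute k l hk hkl (hlm.trans hmN)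

lemma pow_mul_dProd_mul_aProd (he : IsJonesSequence z e (b + m)) (hb : 1 ≤ b) :
    z ^ m * (dProd e (b + m) b * aProd e b (b + m)) = e (b + m) := by
  induction m with
  | zero => simp [dProd_self, aProd_self, (he.isIdempotentElem b hb le_rfl).eq]
  | succ m ih =>
    have hcomm : Commute (z ^ m) (e (b + m + 1)) :=
      (he.commute_parameter _ (by lia) le_rfl).pow_left m
    calc z ^ (m + 1) * (dProd e (b + m + 1) b * aProd e b (b + m + 1))
        = z * (z ^ m * e (b + m + 1) * (dProd e (b + m) b * aProd e b (b + m)) *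
            e (b + m + 1)) := by
          simp only [pow_succ', dProd_succ e (show b ≤ b + m + 1 by lia),
            aProd_succ e (show b ≤ b + m + 1 by lia), mul_assoc]
      _ = z * (e (b + m + 1) * (z ^ m * (dProd e (b + m) b * aProd e b (b + m))) *
            e (b + m + 1)) := by
          rw [hcomm.eq]; simp only [mul_assoc]
      _ = e (b + m + 1) := by
          rw [ih (he.mono (by lia)), he.parameter_mul (b + m) (by lia) le_rfl]

lemma pow_mul_dProd_mul_mul_aProd (he : IsJonesSequence z e (b + m)) (hb : 1 ≤ b) {x y : M}
    (hxy : e b * x * e b = y * e b) (hy : ∀ l, b ≤ l → l ≤ b + m → Commute y (e l)) :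
    z ^ m * (dProd e (b + m) b * x * aProd e b (b + m)) = e (b + m) * y := by
  have hidem := he.isIdempotentElem b hb (by lia)
  have hD := dProd_mul_of_isIdempotentElem (Nat.le_add_right b m) hidem
  have hA := mul_aProd_of_isIdempotentElem (Nat.le_add_right b m) hidem
  have hcomm : Commute y (aProd e b (b + m)) := commute_aProd hy
  calc z ^ m * (dProd e (b + m) b * x * aProd e b (b + m))
      = z ^ m * (dProd e (b + m) b * (e b * x * e b) * aProd e b (b + m)) := by
        conv_lhs => rw [← hD, ← hA]
        simp only [mul_assoc]
    _ = z ^ m * (dProd e (b + m) b * aProd e b (b + m)) * y := by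
        rw [hxy]; simp only [mul_assoc]; rw [hA, hcomm.eq]
    _ = e (b + m) * y := by rw [he.pow_mul_dProd_mul_aProd hb]

lemma commute_pow_dProd (he : IsJonesSequence z e N) (hb : 1 ≤ b) (ha : a ≤ N) (m : ℕ) :
    Commute (z ^ m) (dProd e a b) :=
  commute_dProd fun l _ _ => (he.commute_parameter l (by lia) (by lia)).pow_left m

lemma commute_pow_aProd (he : IsJonesSequence z e N) (ha : 1 ≤ a) (hb : b ≤ N) (m : ℕ) :
    Commute (z ^ m) (aProd e a b) :=
  commute_aProd fun l _ _ => (he.commute_parameter l (by lia) (by lia)).pow_left m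

lemma commute_pow_jonesElt (he : IsJonesSequence z e N) (hn : 2 * n ≤ N + 1) (m : ℕ) :
    Commute (z ^ m) (jonesElt z e n) :=
  ((Commute.refl z).pow_pow m _).mul_right <|
    commute_gElt fun l _ _ => (he.commute_parameter l (by lia) (by lia)).pow_left m

lemma commute_jonesElt (he : IsJonesSequence z e N) (hn : 2 * n + 1 ≤ N) :
    Commute (e (2 * n + 1)) (jonesElt z e n) :=
  ((he.commute_parameter _ (by lia) hn).symm.pow_right _).mul_right <|
    commute_gElt fun l _ _ => (he.commute l _ (by lia) (by lia) hn).symm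

lemma jonesElt_succ (he : IsJonesSequence z e (2 * n + 1)) :
    jonesElt z e (n + 1) =
      aProd e (n + 1) (2 * n + 1) * jonesElt z e n * dProd e (2 * n) (n + 1) * z ^ n := by
  have hA := he.commute_pow_aProd (a := n + 1) (by lia) le_rfl (n * (n - 1) / 2)
  have hA' := he.commute_pow_aProd (a := n + 1) (by lia) le_rfl n
  have hf := he.commute_pow_jonesElt (n := n) (by lia) n
  have hd := he.commute_pow_dProd (a := 2 * n) (b := n + 1) (by lia) (by lia) n
  have hg := gElt_succ_s11 (j := 0) he.commute
  rw [← ((hA'.mul_right hf).mul_right hd).eq, jonesElt, jonesElt, Nat.triangle_succ, add_comm,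
    pow_add, hg, ← mul_assoc (aProd _ _ _), ← hA.eq]
  simp only [add_zero, mul_assoc]

lemma jonesElt_succ' (he : IsJonesSequence z e (2 * n + 1)) :
    jonesElt z e (n + 1) =
      z ^ n * (aProd e (n + 1) (2 * n) * jonesElt z e n * dProd e (2 * n + 1) (n + 1)) := by
  have ha := he.commute_pow_aProd (a := n + 1) (b := 2 * n) (by lia) (by lia) (n * (n - 1) / 2)
  have hg := gElt_succ' (j := 0) he.commute
  rw [jonesElt, jonesElt, Nat.triangle_succ, add_comm, pow_add, hg, ← mul_assoc (aProd _ _ _),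
    ← ha.eq]
  simp only [add_zero, mul_assoc]

theorem jonesElt_compression_succ (he : IsJonesSequence z e (2 * n + 1)) {x y w : M}
    (hxy : e (n + 1) * x * e (n + 1) = y * e (n + 1))
    (hy : ∀ l, n + 1 ≤ l → l ≤ 2 * n + 1 → Commute y (e l))
    (hw : ∀ l, n + 1 ≤ l → l ≤ 2 * n + 1 → Commute w (e l))
    (hyw : jonesElt z e n * y * jonesElt z e n = w * jonesElt z e n) :
    jonesElt z e (n + 1) * x * jonesElt z e (n + 1) = w * jonesElt z e (n + 1) := by
  have hcollapse : z ^ n * (dProd e (2 * n + 1) (n + 1) * x * aProd e (n + 1) (2 * n + 1)) =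
      e (2 * n + 1) * y := by
    have hlast : n + 1 + n = 2 * n + 1 := by lia
    rw [← hlast] at he hy ⊢
    exact he.pow_mul_dProd_mul_mul_aProd (by lia) hxy hy
  have hA : aProd e (n + 1) (2 * n + 1) = aProd e (n + 1) (2 * n) * e (2 * n + 1) :=
    aProd_succ e (by lia)
  have hAw : Commute w (aProd e (n + 1) (2 * n + 1)) := commute_aProd hw
  have hz : Commute (z ^ n) (aProd e (n + 1) (2 * n) * jonesElt z e n) :=
    (he.commute_pow_aProd (by lia) (by lia) n).mul_right (he.commute_pow_jonesElt (by lia) n)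
  have hf : Commute (e (2 * n + 1)) (jonesElt z e n) := he.commute_jonesElt le_rfl
  have hleft := he.jonesElt_succ'
  have hright := he.jonesElt_succ
  set f := jonesElt z e n
  set A := aProd e (n + 1) (2 * n + 1)
  set a := aProd e (n + 1) (2 * n)
  set D := dProd e (2 * n + 1) (n + 1)
  set d := dProd e (2 * n) (n + 1)
  calc jonesElt z e (n + 1) * x * jonesElt z e (n + 1)
      = z ^ n * (a * f * D) * x * (A * f * d * z ^ n) := by rw [← hleft, ← hright]
    _ = z ^ n * (a * f) * (D * x * A) * f * d * z ^ n := by simp only [mul_assoc]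
    _ = a * f * (z ^ n * (D * x * A)) * f * d * z ^ n := by rw [hz.eq]; simp only [mul_assoc]
    _ = a * (f * e (2 * n + 1)) * y * f * d * z ^ n := by rw [hcollapse]; simp only [mul_assoc]
    _ = A * (f * y * f) * d * z ^ n := by rw [← hf.eq, hA]; simp only [mul_assoc]
    _ = A * w * f * d * z ^ n := by rw [hyw]; simp only [mul_assoc]
    _ = w * jonesElt z e (n + 1) := by rw [← hAw.eq, hright]; simp only [mul_assoc]

end IsJonesSequence

/-- The composition `E_1 ∘ E_2 ∘ ⋯ ∘ E_m` of arbitrary self-maps of a type; `iterE` is the case of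
linear maps. -/
def descendingComp {α : Type*} (E : ℕ → α → α) : ℕ → α → α
  | 0, x => x
  | m + 1, x => descendingComp E m (E (m + 1) x)

lemma iterE_eq_descendingComp {V : Type*} [AddCommGroup V] [Module ℂ V] (E : ℕ → V →ₗ[ℂ] V)
    (m : ℕ) (x : V) : iterE E m x = descendingComp (fun k => E k) m x := by
  induction m generalizing x with
  | zero => rfl
  | succ m ih => exact ih _

lemma mapsTo_descendingComp {α : Type*} {E : ℕ → α → α} {B : ℕ → Set α} {n : ℕ}
    (hE : ∀ k < n, Set.MapsTo (E (k + 1)) (B (k + 1)) (B k)) :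
    Set.MapsTo (descendingComp E n) (B n) (B 0) := by
  induction n with
  | zero => exact Set.mapsTo_id _
  | succ n ih => exact (ih fun k hk => hE k (by lia)).comp (hE n n.lt_succ_self)

theorem jones_fn_compression_tower_general {z : M} {n : ℕ} (he : IsJonesSequence z e (2 * n - 1))
    {B : ℕ → Set M} {E : ℕ → M → M}
    (hE : ∀ k < n, Set.MapsTo (E (k + 1)) (B (k + 1)) (B k))
    (hBe : ∀ k < n, ∀ l, k < l → l ≤ 2 * n - 1 → ∀ x ∈ B k, Commute x (e l))
    (hEe : ∀ k < n, ∀ x ∈ B (k + 1), e (k + 1) * x * e (k + 1) = E (k + 1) x * e (k + 1))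
    {x : M} (hx : x ∈ B n) :
    jonesElt z e n * x * jonesElt z e n = descendingComp E n x * jonesElt z e n := by
  induction n generalizing x with
  | zero => simp [jonesElt, gElt, descendingComp]
  | succ n ih =>
    have hy : E (n + 1) x ∈ B n := hE n n.lt_succ_self hx
    have hE' : ∀ k < n, Set.MapsTo (E (k + 1)) (B (k + 1)) (B k) := fun k hk => hE k (by lia)
    have hw : descendingComp E n (E (n + 1) x) ∈ B 0 := mapsTo_descendingComp hE' hy
    exact he.jonesElt_compression_succ (hEe n n.lt_succ_self x hx)
      (fun l _ _ => hBe n n.lt_succ_self l (by lia) (by lia) _ hy)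
      (fun l _ _ => hBe 0 n.succ_pos l (by lia) (by lia) _ hw)
      (ih (he.mono (by lia)) hE' (fun k _ l _ _ => hBe k (by lia) l (by lia) (by lia))
        (fun k _ => hEe k (by lia)) hy)

end JonesRelations

/-- Let `B₀ ⊆ B₁ ⊆ ⋯ ⊆ Bₙ` be unital C*-subalgebras of a unital C*-algebra `C` with
conditional expectations `E_k : B_k → B_{k-1}`, let `z ∈ B₀` be positive, invertible and
central in `C`, and let `e₁, …, e_{2n-1}` be projections satisfying the Jones relations,
commuting with `B_k` for indices `> k`, and implementing the expectations:
`e_k x e_k = E_k (x) e_k` for `x ∈ B_k`.  Then, with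
`fₙ = z^{n(n-1)/2} (eₙ ⋯ e₁)(e_{n+1} ⋯ e₂) ⋯ (e_{2n-1} ⋯ eₙ)`, every `x ∈ Bₙ` satisfies
`fₙ x fₙ = (E₁ ∘ E₂ ∘ ⋯ ∘ Eₙ)(x) fₙ`. -/
theorem jones_fn_compression_tower
    {C : Type*} [CStarAlgebra C] [PartialOrder C] [StarOrderedRing C]
    (n : ℕ) (Bsub : ℕ → StarSubalgebra ℂ C)
    (hchain : ∀ k, k < n → Bsub k ≤ Bsub (k + 1))
    (E : ℕ → (C →ₗ[ℂ] C))
    (hCE : ∀ k, 1 ≤ k → k ≤ n →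
      (∀ x ∈ Bsub k, E k x ∈ Bsub (k - 1)) ∧
      (∀ x ∈ Bsub (k - 1), E k x = x) ∧
      (∀ a ∈ Bsub (k - 1), ∀ c ∈ Bsub (k - 1), ∀ x ∈ Bsub k,
        E k (a * x * c) = a * E k x * c) ∧
      (∀ x ∈ Bsub k, 0 ≤ x → 0 ≤ E k x))
    (z : C) [Invertible z] (hz0 : z ∈ Bsub 0) (hzpos : 0 ≤ z)
    (hzc : ∀ c : C, z * c = c * z)
    (e : ℕ → C)
    (hproj : ∀ k, 1 ≤ k → k ≤ 2 * n - 1 → star (e k) = e k ∧ e k * e k = e k)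
    (h1 : ∀ k, 1 ≤ k → k + 1 ≤ 2 * n - 1 → e k * e (k + 1) * e k = ⅟z * e k)
    (h2 : ∀ k, 1 ≤ k → k + 1 ≤ 2 * n - 1 → e (k + 1) * e k * e (k + 1) = ⅟z * e (k + 1))
    (h3 : ∀ k l, 1 ≤ k → k ≤ 2 * n - 1 → 1 ≤ l → l ≤ 2 * n - 1 →
      (k + 1 < l ∨ l + 1 < k) → e k * e l = e l * e k)
    (hcommB : ∀ l k, k ≤ n → k < l → l ≤ 2 * n - 1 → ∀ x ∈ Bsub k, e l * x = x * e l)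
    (hJonesE : ∀ k, 1 ≤ k → k ≤ n → ∀ x ∈ Bsub k, e k * x * e k = E k x * e k)
    (x : C) (hx : x ∈ Bsub n) :
    (z ^ (n * (n - 1) / 2) * gElt e n 0) * x * (z ^ (n * (n - 1) / 2) * gElt e n 0)
      = iterE E n x * (z ^ (n * (n - 1) / 2) * gElt e n 0) := by
  have he : IsJonesSequence z e (2 * n - 1) :=
    { isIdempotentElem := fun k hk hkn => (hproj k hk hkn).2
      commute_parameter := fun k _ _ => hzc (e k)
      parameter_mul := fun k hk hkn => by rw [h2 k hk hkn, mul_invOf_cancel_left]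
      commute := fun k l _ _ _ => h3 k l (by lia) (by lia) (by lia) (by lia) (by lia) }
  rw [iterE_eq_descendingComp]
  exact jones_fn_compression_tower_general (B := fun k => Bsub k) (E := fun k => E k) he
    (fun k hk => (hCE (k + 1) (by lia) hk).1)
    (fun k hk l hkl hl y hy => (hcommB l k hk.le hkl hl y hy).symm)
    (fun k hk => hJonesE (k + 1) (by lia) hk) hx
end
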